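/- arXiv:1610.05406 — 2 statements merged into one kernel-verified Lean document; each statement's English description precedes it below -/
import Mathlib

section
/- Every finite simple 2-degenerate graph G with maximum degree Δ satisfies χ'_s(G) ≤ 5Δ + 1. -/
open scoped Classical

namespace StrongEC

/-- Two edges of `G` conflict for strong edge-coloring: they are distinct and either share
an endpoint or are both adjacent to a common edge of `G`. -/
def Conflict {V : Type*} (G : SimpleGraph V) (e e' : Sym2 V) : Prop :=
  e ≠ e' ∧ ((∃ v, v ∈ e ∧ v ∈ e') ∨
    ∃ f ∈ G.edgeSet, (∃ v, v ∈ e ∧ v ∈ f) ∧ (∃ w, w ∈ e' ∧ w ∈ f))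

/-- `C` is a strong edge-coloring of `G` with `k` colors. -/
def IsStrongColoring {V : Type*} (G : SimpleGraph V) {k : ℕ} (C : Sym2 V → Fin k) : Prop :=
  ∀ e ∈ G.edgeSet, ∀ e' ∈ G.edgeSet, Conflict G e e' → C e ≠ C e'

/-- `G` admits a strong `k`-edge-coloring. -/
def HasStrongColoring {V : Type*} (G : SimpleGraph V) (k : ℕ) : Prop :=
  ∃ C : Sym2 V → Fin k, IsStrongColoring G C

/-- The strong chromatic index of `G`: the least `k` such that `G` admits a strong
`k`-edge-coloring. -/
noncomputable def strongChromaticIndex {V : Type*} (G : SimpleGraph V) : ℕ :=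
  sInf {k | HasStrongColoring G k}

/-- `G` is 2-degenerate: every induced subgraph on a nonempty vertex set has a vertex of
degree at most 2 in it. -/
def TwoDegenerate {V : Type*} (G : SimpleGraph V) : Prop :=
  ∀ A : Finset V, A.Nonempty → ∃ v ∈ A, (G.neighborSet v ∩ ↑A).ncard ≤ 2

/-- Greedy choice from lists avoiding equal choices on related indices. -/
theorem greedy_choice {ι κ : Type*} [Nonempty κ] (L : ι → Finset κ) (r : ι → ι → Prop)
    (hrefl : ∀ a, r a a) (hsymm : ∀ a b, r a b → r b a) (N : Finset ι)
    (h : ∀ y ∈ N, (N.filter (fun z => r y z)).card ≤ (L y).card) :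
    ∃ g : ι → κ, (∀ y ∈ N, g y ∈ L y) ∧
      ∀ y ∈ N, ∀ y' ∈ N, y ≠ y' → r y y' → g y ≠ g y' := by
  induction N using Finset.induction_on with
  | empty => exact ⟨fun _ => Classical.arbitrary κ, by simp, by simp⟩
  | insert a N ha ih =>
    obtain ⟨g, hg1, hg2⟩ := ih (fun y hy => le_trans
      (Finset.card_le_card (Finset.filter_subset_filter _ (Finset.subset_insert a N)))
      (h y (Finset.mem_insert_of_mem hy)))
    have hcard : ((N.filter (fun z => r a z)).image g).card < (L a).card := by
      refine lt_of_le_of_lt Finset.card_image_le (lt_of_lt_of_le ?_ (h a (Finset.mem_insert_self _ _)))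
      rw [Finset.filter_insert, if_pos (hrefl a), Finset.card_insert_of_notMem (by simp [ha])]
      omega
    obtain ⟨k, hk1, hk2⟩ := Finset.exists_mem_notMem_of_card_lt_card hcard
    have hne : ∀ y ∈ N, y ≠ a := fun y hy e => ha (e ▸ hy)
    have hk3 : ∀ y ∈ N, r a y → g y ≠ k := by
      intro y hy hr e
      exact hk2 (Finset.mem_image.2 ⟨y, by simp [hy, hr], e⟩)
    refine ⟨Function.update g a k, ?_, ?_⟩
    · intro y hy
      rcases Finset.mem_insert.1 hy with rfl | hy
      · simpa using hk1
      · rw [Function.update_of_ne (hne y hy)]; exact hg1 y hy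
    · intro y hy y' hy' hyy hr
      rcases Finset.mem_insert.1 hy with rfl | hyN
      · rcases Finset.mem_insert.1 hy' with rfl | hyN'
        · exact absurd rfl hyy
        · rw [Function.update_self, Function.update_of_ne (hne y' hyN')]
          exact (hk3 y' hyN' hr).symm
      · rcases Finset.mem_insert.1 hy' with rfl | hyN'
        · rw [Function.update_self, Function.update_of_ne (hne y hyN)]
          exact hk3 y hyN (hsymm _ _ hr)
        · rw [Function.update_of_ne (hne y hyN), Function.update_of_ne (hne y' hyN')]
          exact hg2 y hyN y' hyN' hyy hr

/-- Parents of `x`. -/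
noncomputable def par {V : Type*} [Fintype V] (P : V → V → Prop) (x : V) : Finset V :=
  Finset.univ.filter (fun p => P x p)

/-- Children of `q`. -/
noncomputable def chl {V : Type*} [Fintype V] (P : V → V → Prop) (q : V) : Finset V :=
  Finset.univ.filter (fun y => P y q)

theorem mem_par {V : Type*} [Fintype V] {P : V → V → Prop} {x p : V} : p ∈ par P x ↔ P x p := by
  simp [par]

theorem mem_chl {V : Type*} [Fintype V] {P : V → V → Prop} {q y : V} : y ∈ chl P q ↔ P y q := by
  simp [chl]

/-- The invariant: `A` is the set of processed vertices, `c y q` is the color of the edge from a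
child `y` to its parent `q` (meaningful when all parents of `y` are processed), and `R q` is the
set of colors reserved for the edges from the children of `q` to `q`. -/
structure Inv {V κ : Type*} [Fintype V] (P : V → V → Prop) (A : Finset V) (c : V → V → κ)
    (R : V → Finset κ) : Prop where
  mem : ∀ y q, (∀ p, P y p → p ∈ A) → P y q → c y q ∈ R q
  inj : ∀ y y' q, (∀ p, P y p → p ∈ A) → (∀ p, P y' p → p ∈ A) → P y q → P y' q → y ≠ y' →
    c y q ≠ c y' q
  disj : ∀ x p, x ∈ A → P x p → Disjoint (R x) (R p)
  grand : ∀ x p s, x ∈ A → P x p → P p s → c p s ∉ R x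
  cross : ∀ b q q', (∀ p, P b p → p ∈ A) → P b q → P b q' → q ≠ q' → c b q' ∉ R q
  up : ∀ b q q' s, (∀ p, P b p → p ∈ A) → P b q → P b q' → q ≠ q' → P q s → c b q' ≠ c q s
  card : ∀ q ∈ A, (R q).card = (chl P q).card + 2

/-- All colors at `p`: the reserved ones and those of the edges to its parents. -/
noncomputable def starC {V κ : Type*} [Fintype V] (P : V → V → Prop) (c : V → V → κ)
    (R : V → Finset κ) (p : V) : Finset κ := R p ∪ (par P p).image (c p)

theorem starC_card {V κ : Type*} [Fintype V] (P : V → V → Prop) (A : Finset V) (c : V → V → κ)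
    (R : V → Finset κ) (D : ℕ) (hI : Inv P A c R)
    (hdeg : ∀ x, (chl P x).card + (par P x).card ≤ D) (p : V) (hp : p ∈ A) :
    (starC P c R p).card ≤ D + 2 := by
  have h1 := Finset.card_union_le (R p) ((par P p).image (c p))
  have h2 : ((par P p).image (c p)).card ≤ (par P p).card := Finset.card_image_le
  have h3 := hI.card p hp
  have h4 := hdeg p
  unfold starC
  omega

theorem inv_step {V κ : Type*} [Fintype V] [Fintype κ] (P : V → V → Prop) (D : ℕ) (hD : 1 ≤ D)
    (hκ : Fintype.card κ = 5 * D + 1)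
    (hpar : ∀ x, (par P x).card ≤ 2) (hdeg : ∀ x, (chl P x).card + (par P x).card ≤ D)
    (A : Finset V) (hA : ∀ x ∈ A, ∀ p, P x p → p ∈ A) (x : V) (hx : x ∉ A)
    (hxA : ∀ p, P x p → p ∈ A) (c : V → V → κ) (R : V → Finset κ) (hI : Inv P A c R) :
    ∃ c' R', Inv (κ := κ) P (insert x A) c' R' := by
  have : Nonempty κ := Fintype.card_pos_iff.1 (by omega)
  set N : Finset V := (chl P x).filter (fun y => ∀ p, P y p → p ∈ insert x A) with hN
  have memN : ∀ y, y ∈ N ↔ P y x ∧ ∀ p, P y p → p ∈ insert x A := by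
    intro y; simp [hN, mem_chl]
  have NA : ∀ y ∈ N, y ∉ A := fun y hy hyA => hx (hA y hyA x ((memN y).1 hy).1)
  have hxx : ¬ P x x := fun h => hx (hxA x h)
  have hxN : x ∉ N := fun h => hxx ((memN x).1 h).1
  have hncard : N.card ≤ (chl P x).card := Finset.card_filter_le _ _
  have uniq : ∀ y ∈ N, ∀ q q', P y q → P y q' → q ≠ x → q' ≠ x → q = q' := by
    intro y hy q q' hq hq' hqx hqx'
    by_contra hne
    have h3 : ({x, q, q'} : Finset V) ⊆ par P y := by
      intro z hz
      simp only [Finset.mem_insert, Finset.mem_singleton] at hz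
      rcases hz with rfl | rfl | rfl
      · exact mem_par.2 ((memN y).1 hy).1
      · exact mem_par.2 hq
      · exact mem_par.2 hq'
    have h4 := Finset.card_le_card h3
    rw [Finset.card_eq_three.2 ⟨x, q, q', hqx.symm, hqx'.symm, hne, rfl⟩] at h4
    have := hpar y
    omega
  have inA : ∀ y ∈ N, ∀ q, P y q → q ≠ x → q ∈ A := fun y hy q hq hqx =>
    (Finset.mem_insert.1 (((memN y).1 hy).2 q hq)).resolve_left hqx
  obtain ⟨g, hg1, hg2⟩ : ∃ g : V → κ,
      (∀ y ∈ N, ∀ q, P y q → q ≠ x → g y ∈ R q ∧ (∀ z, P z q → (∀ p, P z p → p ∈ A) → g y ≠ c z q)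
        ∧ ∀ p, P x p → g y ≠ c x p) ∧
      ∀ y ∈ N, ∀ y' ∈ N, y ≠ y' → ∀ q, q ≠ x → P y q → P y' q → g y ≠ g y' := by
    let N' := N.filter (fun y => ∃ q, P y q ∧ q ≠ x)
    let L : V → Finset κ := fun y => Finset.univ.filter (fun k => ∀ q, P y q → q ≠ x → k ∈ R q ∧
      (∀ z, P z q → (∀ p, P z p → p ∈ A) → k ≠ c z q) ∧ ∀ p, P x p → k ≠ c x p)
    obtain ⟨g, h1, h2⟩ := greedy_choice L
      (fun y y' => y = y' ∨ ∃ q, q ≠ x ∧ P y q ∧ P y' q) (fun a => Or.inl rfl)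
      (by rintro a b (rfl | ⟨q, h1, h2, h3⟩)
          · exact Or.inl rfl
          · exact Or.inr ⟨q, h1, h3, h2⟩) N' (by
        intro y hy
        obtain ⟨hyN, q, hq, hqx⟩ := Finset.mem_filter.1 hy
        have hqA := inA y hyN q hq hqx
        let Cm := (chl P q).filter (fun z => ∀ p, P z p → p ∈ A)
        let Un := (chl P q).filter (fun z => ¬ ∀ p, P z p → p ∈ A)
        have e1 : Cm.card + Un.card = (chl P q).card :=
          Finset.card_filter_add_card_filter_not _
        have e2 : R q \ (Cm.image (fun z => c z q) ∪ (par P x).image (c x)) ⊆ L y := by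
          intro k hk
          simp only [Finset.mem_sdiff, Finset.mem_union, not_or, Finset.mem_image, not_exists,
            not_and] at hk
          obtain ⟨k1, k2, k3⟩ := hk
          simp only [L, Finset.mem_filter, Finset.mem_univ, true_and]
          intro q' hq' hqx'
          obtain rfl := uniq y hyN q q' hq hq' hqx hqx'
          exact ⟨k1, fun z hz hz2 e => k2 z (Finset.mem_filter.2 ⟨mem_chl.2 hz, hz2⟩) e.symm,
            fun p hp e => k3 p (mem_par.2 hp) e.symm⟩
        have e3 : N'.filter (fun z => y = z ∨ ∃ q, q ≠ x ∧ P y q ∧ P z q) ⊆ Un := by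
          intro z hz
          obtain ⟨hz1, hz2⟩ := Finset.mem_filter.1 hz
          obtain ⟨hzN, -⟩ := Finset.mem_filter.1 hz1
          refine Finset.mem_filter.2 ⟨mem_chl.2 ?_, fun h => hx (h x ((memN z).1 hzN).1)⟩
          rcases hz2 with rfl | ⟨q', h1, h2, h3⟩
          · exact hq
          · obtain rfl := uniq y hyN q q' hq h2 hqx h1
            exact h3
        have e4 := Finset.card_le_card e2
        have e6 := Finset.le_card_sdiff (Cm.image (fun z => c z q) ∪ (par P x).image (c x)) (R q)
        have e7 := Finset.card_union_le (Cm.image (fun z => c z q)) ((par P x).image (c x))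
        have e8 : (Cm.image (fun z => c z q)).card ≤ Cm.card := Finset.card_image_le
        have e9 : ((par P x).image (c x)).card ≤ (par P x).card := Finset.card_image_le
        have e10 := hI.card q hqA
        have e11 := hpar x
        refine le_trans (Finset.card_le_card (t := Un) fun z hz => e3 ?_) ?_
        · simp only [Finset.mem_filter] at hz ⊢
          exact hz
        omega)
    refine ⟨g, ?_, ?_⟩
    · intro y hy q hq hqx
      have := h1 y (Finset.mem_filter.2 ⟨hy, q, hq, hqx⟩)
      exact (Finset.mem_filter.1 this).2 q hq hqx
    · intro y hy y' hy' hne q hqx hq hq'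
      exact h2 y (Finset.mem_filter.2 ⟨hy, q, hq, hqx⟩) y' (Finset.mem_filter.2 ⟨hy', q, hq', hqx⟩)
        hne (Or.inr ⟨q, hqx, hq, hq'⟩)
  let S := starC P c R
  have hS : ∀ p ∈ A, (S p).card ≤ D + 2 := starC_card P A c R D hI hdeg
  let F0 : Finset κ := (par P x).biUnion S
  have hF0 : F0.card ≤ (par P x).card * (D + 2) :=
    Finset.card_biUnion_le_card_mul _ _ _ (fun p hp => hS p (hxA p (mem_par.1 hp)))
  have hdx := hdeg x
  have hpx := hpar x
  obtain ⟨h, hh1, hh2⟩ : ∃ h : V → κ,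
      (∀ y ∈ N, h y ∉ F0 ∧ (∀ z ∈ N, (∃ q, P z q ∧ q ≠ x) → h y ≠ g z) ∧
        ∀ q, P y q → q ≠ x → h y ∉ S q) ∧
      ∀ y ∈ N, ∀ y' ∈ N, y ≠ y' → h y ≠ h y' := by
    let L : V → Finset κ := fun y => Finset.univ.filter (fun k => k ∉ F0 ∧
      (∀ z ∈ N, (∃ q, P z q ∧ q ≠ x) → k ≠ g z) ∧ ∀ q, P y q → q ≠ x → k ∉ S q)
    obtain ⟨h, h1, h2⟩ := greedy_choice L (fun _ _ => True) (fun _ => trivial)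
      (fun _ _ _ => trivial) N (by
        intro y hy
        rw [Finset.filter_true]
        have key : ∃ B : Finset κ, B.card ≤ (par P x).card * (D + 2) + (N.card - 1) + (D + 2) ∧
            Bᶜ ⊆ L y := by
          by_cases hq : ∃ q, P y q ∧ q ≠ x
          · obtain ⟨q, hq, hqx⟩ := hq
            refine ⟨F0 ∪ (N.erase y).image g ∪ S q, ?_, ?_⟩
            · have a1 := Finset.card_union_le (F0 ∪ (N.erase y).image g) (S q)
              have a2 := Finset.card_union_le F0 ((N.erase y).image g)
              have a3 : ((N.erase y).image g).card ≤ (N.erase y).card := Finset.card_image_le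
              rw [Finset.card_erase_of_mem hy] at a3
              have a4 := hS q (inA y hy q hq hqx)
              omega
            · intro k hk
              simp only [Finset.mem_compl, Finset.mem_union, not_or, Finset.mem_image, not_exists,
                not_and, Finset.mem_erase] at hk
              obtain ⟨⟨k1, k2⟩, k3⟩ := hk
              simp only [L, Finset.mem_filter, Finset.mem_univ, true_and]
              refine ⟨k1, ?_, ?_⟩
              · intro z hz _ e
                by_cases hzy : z = y
                · subst hzy
                  apply k3
                  rw [e]
                  exact Finset.mem_union_left _ (hg1 z hz q hq hqx).1
                · exact k2 z ⟨hzy, hz⟩ e.symm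
              · intro q' hq' hqx'
                obtain rfl := uniq y hy q q' hq hq' hqx hqx'
                exact k3
          · refine ⟨F0 ∪ (N.erase y).image g, ?_, ?_⟩
            · have a2 := Finset.card_union_le F0 ((N.erase y).image g)
              have a3 : ((N.erase y).image g).card ≤ (N.erase y).card := Finset.card_image_le
              rw [Finset.card_erase_of_mem hy] at a3
              omega
            · intro k hk
              simp only [Finset.mem_compl, Finset.mem_union, not_or, Finset.mem_image, not_exists,
                not_and, Finset.mem_erase] at hk
              obtain ⟨k1, k2⟩ := hk
              simp only [L, Finset.mem_filter, Finset.mem_univ, true_and]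
              refine ⟨k1, ?_, fun q h1 h2 => absurd ⟨q, h1, h2⟩ hq⟩
              intro z hz hzq e
              by_cases hzy : z = y
              · subst hzy
                exact hq hzq
              · exact k2 z ⟨hzy, hz⟩ e.symm
        obtain ⟨B, hB, hBL⟩ := key
        have b1 := Finset.card_le_card hBL
        rw [Finset.card_compl, hκ] at b1
        have b2 : 1 ≤ N.card := Finset.card_pos.2 ⟨y, hy⟩
        generalize (par P x).card = m at *
        interval_cases m <;> omega)
    exact ⟨h, fun y hy => (Finset.mem_filter.1 (h1 y hy)).2,
      fun y hy y' hy' hne => h2 y hy y' hy' hne trivial⟩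
  obtain ⟨Rx, hR1, hR2, hR3⟩ : ∃ Rx : Finset κ, N.image h ⊆ Rx ∧
      Rx ⊆ (F0 ∪ (N.filter (fun z => ∃ q, P z q ∧ q ≠ x)).image g)ᶜ ∧
      Rx.card = (chl P x).card + 2 := by
    apply Finset.exists_subsuperset_card_eq
    · intro k hk
      obtain ⟨y, hy, rfl⟩ := Finset.mem_image.1 hk
      obtain ⟨k1, k2, -⟩ := hh1 y hy
      simp only [Finset.mem_compl, Finset.mem_union, not_or, Finset.mem_image, not_exists,
        not_and, Finset.mem_filter]
      exact ⟨k1, fun z hz e => k2 z hz.1 hz.2 e.symm⟩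
    · exact le_trans Finset.card_image_le (by omega)
    · have a2 := Finset.card_union_le F0 ((N.filter (fun z => ∃ q, P z q ∧ q ≠ x)).image g)
      have a3 : ((N.filter (fun z => ∃ q, P z q ∧ q ≠ x)).image g).card ≤ N.card :=
        le_trans Finset.card_image_le (Finset.card_filter_le _ _)
      rw [Finset.card_compl, hκ]
      generalize (par P x).card = m at *
      interval_cases m <;> omega
  have hRF : ∀ k ∈ Rx, k ∉ F0 := fun k hk hk' =>
    (Finset.mem_compl.1 (hR2 hk)) (Finset.mem_union_left _ hk')
  have hRg : ∀ y ∈ N, ∀ q, P y q → q ≠ x → g y ∉ Rx := fun y hy q hq hqx hk =>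
    (Finset.mem_compl.1 (hR2 hk)) (Finset.mem_union_right _ (Finset.mem_image.2
      ⟨y, Finset.mem_filter.2 ⟨hy, q, hq, hqx⟩, rfl⟩))
  have hFS : ∀ p, P x p → ∀ k ∈ S p, k ∈ F0 := fun p hp k hk =>
    Finset.mem_biUnion.2 ⟨p, mem_par.2 hp, hk⟩
  have hSR : ∀ p, ∀ k ∈ R p, k ∈ S p := fun p k hk => Finset.mem_union_left _ hk
  have hSc : ∀ p s, P p s → c p s ∈ S p := fun p s hs =>
    Finset.mem_union_right _ (Finset.mem_image.2 ⟨s, mem_par.2 hs, rfl⟩)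
  let c' : V → V → κ := fun y q => if y ∈ N then (if q = x then h y else g y) else c y q
  let R' : V → Finset κ := fun q => if q = x then Rx else R q
  have cx : ∀ y ∈ N, c' y x = h y := fun y hy => by simp [c', hy]
  have cg : ∀ y ∈ N, ∀ q, q ≠ x → c' y q = g y := fun y hy q hq => by simp [c', hy, hq]
  have co : ∀ y, y ∉ N → ∀ q, c' y q = c y q := fun y hy q => by simp [c', hy]
  have Rx' : R' x = Rx := by simp [R']
  have Ro : ∀ q, q ≠ x → R' q = R q := fun q hq => by simp [R', hq]
  have old : ∀ y, y ∉ N → (∀ p, P y p → p ∈ insert x A) → ∀ p, P y p → p ∈ A := by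
    intro y hy hc p hp
    rcases Finset.mem_insert.1 (hc p hp) with rfl | h
    · exact absurd ((memN y).2 ⟨hp, hc⟩) hy
    · exact h
  have neA : ∀ p, p ∈ A → p ≠ x := fun p hp e => hx (e ▸ hp)
  have nNA : ∀ p, p ∈ A → p ∉ N := fun p hp hN => NA p hN hp
  refine ⟨c', R', ?_, ?_, ?_, ?_, ?_, ?_, ?_⟩
  · intro y q hc hq
    by_cases hy : y ∈ N
    · by_cases hqx : q = x
      · subst hqx
        rw [cx y hy, Rx']
        exact hR1 (Finset.mem_image_of_mem _ hy)
      · rw [cg y hy q hqx, Ro q hqx]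
        exact (hg1 y hy q hq hqx).1
    · have := old y hy hc
      rw [co y hy, Ro q (neA q (this q hq))]
      exact hI.mem y q this hq
  · intro y y' q hc hc' hq hq' hne
    by_cases hqx : q = x
    · subst hqx
      have hy := (memN y).2 ⟨hq, hc⟩
      have hy' := (memN y').2 ⟨hq', hc'⟩
      rw [cx y hy, cx y' hy']
      exact hh2 y hy y' hy' hne
    · by_cases hy : y ∈ N
      · by_cases hy' : y' ∈ N
        · rw [cg y hy q hqx, cg y' hy' q hqx]
          exact hg2 y hy y' hy' hne q hqx hq hq'
        · rw [cg y hy q hqx, co y' hy']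
          exact (hg1 y hy q hq hqx).2.1 y' hq' (old y' hy' hc')
      · by_cases hy' : y' ∈ N
        · rw [cg y' hy' q hqx, co y hy]
          exact ((hg1 y' hy' q hq' hqx).2.1 y hq (old y hy hc)).symm
        · rw [co y hy, co y' hy']
          exact hI.inj y y' q (old y hy hc) (old y' hy' hc') hq hq' hne
  · intro z p hz hp
    rcases Finset.mem_insert.1 hz with rfl | hz
    · rw [Rx', Ro p (neA p (hxA p hp))]
      exact Finset.disjoint_left.2 fun k hk hk' => hRF k hk (hFS p hp k (hSR p k hk'))
    · rw [Ro z (neA z hz), Ro p (neA p (hA z hz p hp))]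
      exact hI.disj z p hz hp
  · intro z p s hz hp hs
    rcases Finset.mem_insert.1 hz with rfl | hz
    · rw [Rx', co p (nNA p (hxA p hp))]
      exact fun hk => hRF _ hk (hFS p hp _ (hSc p s hs))
    · rw [Ro z (neA z hz), co p (nNA p (hA z hz p hp))]
      exact hI.grand z p s hz hp hs
  · intro b q q' hc hq hq' hne
    by_cases hb : b ∈ N
    · by_cases hqx : q = x
      · subst hqx
        rw [cg b hb q' hne.symm, Rx']
        exact hRg b hb q' hq' hne.symm
      · have hqx' : q' = x := by
          by_contra h'
          exact hne (uniq b hb q q' hq hq' hqx h')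
        subst hqx'
        rw [cx b hb, Ro q hqx]
        exact fun hk => (hh1 b hb).2.2 q hq hqx (hSR q _ hk)
    · have := old b hb hc
      rw [co b hb, Ro q (neA q (this q hq))]
      exact hI.cross b q q' this hq hq' hne
  · intro b q q' s hc hq hq' hne hs
    by_cases hb : b ∈ N
    · by_cases hqx : q = x
      · subst hqx
        rw [cg b hb q' hne.symm, co q hxN]
        exact (hg1 b hb q' hq' hne.symm).2.2 s hs
      · have hqx' : q' = x := by
          by_contra h'
          exact hne (uniq b hb q q' hq hq' hqx h')
        subst hqx'
        rw [cx b hb, co q (nNA q (inA b hb q hq hqx))]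
        exact fun e => (hh1 b hb).2.2 q hq hqx (e ▸ hSc q s hs)
    · have := old b hb hc
      rw [co b hb, co q (nNA q (this q hq))]
      exact hI.up b q q' s this hq hq' hne hs
  · intro q hq
    rcases Finset.mem_insert.1 hq with rfl | hq
    · rw [Rx', hR3]
    · rw [Ro q (neA q hq)]
      exact hI.card q hq

theorem inv_all {V κ : Type*} [Fintype V] [Fintype κ] (P : V → V → Prop) (D : ℕ) (hD : 1 ≤ D)
    (hκ : Fintype.card κ = 5 * D + 1) (f : V → ℕ) (hf : Function.Injective f)
    (hPf : ∀ x p, P x p → f p < f x)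
    (hpar : ∀ x, (par P x).card ≤ 2) (hdeg : ∀ x, (chl P x).card + (par P x).card ≤ D) :
    ∃ c R, Inv (κ := κ) P Finset.univ c R := by
  have : Nonempty κ := Fintype.card_pos_iff.1 (by omega)
  have key : ∀ n : ℕ, ∃ c R, Inv (κ := κ) P (Finset.univ.filter (fun v => f v < n)) c R := by
    intro n
    induction n with
    | zero =>
      refine ⟨fun _ _ => Classical.arbitrary κ, fun _ => ∅, ?_, ?_, ?_, ?_, ?_, ?_, ?_⟩
      · intro y q hc hq; simpa using hc q hq
      · intro y y' q hc _ hq; simpa using hc q hq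
      · intro x p hx; simp at hx
      · intro x p s hx; simp at hx
      · intro b q q' hc hq; simpa using hc q hq
      · intro b q q' s hc hq; simpa using hc q hq
      · intro q hq; simp at hq
    | succ n ih =>
      obtain ⟨c, R, hI⟩ := ih
      by_cases hx : ∃ x, f x = n
      · obtain ⟨x, hx⟩ := hx
        have e : Finset.univ.filter (fun v => f v < n + 1) =
            insert x (Finset.univ.filter (fun v => f v < n)) := by
          ext v
          simp only [Finset.mem_filter, Finset.mem_univ, true_and, Finset.mem_insert]
          constructor
          · intro h
            by_cases h' : f v = n
            · exact Or.inl (hf (h'.trans hx.symm))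
            · exact Or.inr (by omega)
          · rintro (rfl | h) <;> omega
        rw [e]
        refine inv_step P D hD hκ hpar hdeg _ ?_ x ?_ ?_ c R hI
        · intro z hz p hp
          have := hPf z p hp
          simp only [Finset.mem_filter, Finset.mem_univ, true_and] at hz ⊢
          omega
        · simp [hx]
        · intro p hp
          have := hPf x p hp
          simp only [Finset.mem_filter, Finset.mem_univ, true_and]
          omega
      · have e : Finset.univ.filter (fun v => f v < n + 1) =
            Finset.univ.filter (fun v => f v < n) := by
          ext v
          simp only [Finset.mem_filter, Finset.mem_univ, true_and]
          have : f v ≠ n := fun h => hx ⟨v, h⟩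
          omega
        rw [e]
        exact ⟨c, R, hI⟩
  obtain ⟨c, R, hI⟩ := key (Finset.univ.sup f + 1)
  refine ⟨c, R, ?_⟩
  convert hI using 1
  ext v
  simp [Nat.lt_succ_iff, Finset.le_sup (f := f) (Finset.mem_univ v)]

/-- A degeneracy ordering. -/
theorem exists_order {V : Type*} (G : SimpleGraph V) (h2 : TwoDegenerate G) (A : Finset V) :
    ∃ f : V → ℕ, Set.InjOn f A ∧
      ∀ v ∈ A, (A.filter (fun p => G.Adj v p ∧ f p < f v)).card ≤ 2 := by
  induction hn : A.card generalizing A with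
  | zero =>
    obtain rfl := Finset.card_eq_zero.1 hn
    exact ⟨fun _ => 0, by simp, by simp⟩
  | succ n ih =>
    obtain ⟨v, hv, hv2⟩ := h2 A (Finset.card_pos.1 (by omega))
    obtain ⟨f, hf1, hf2⟩ := ih (A.erase v) (by rw [Finset.card_erase_of_mem hv]; omega)
    have hlt : ∀ u ∈ A.erase v, f u < (A.erase v).sup f + 1 := fun u hu =>
      Nat.lt_succ_of_le (Finset.le_sup hu)
    refine ⟨Function.update f v ((A.erase v).sup f + 1), ?_, ?_⟩
    · intro a ha b hb hab
      by_cases hav : a = v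
      · by_cases hbv : b = v
        · rw [hav, hbv]
        · subst hav
          rw [Function.update_self, Function.update_of_ne hbv] at hab
          have := hlt b (Finset.mem_erase.2 ⟨hbv, hb⟩)
          omega
      · by_cases hbv : b = v
        · subst hbv
          rw [Function.update_self, Function.update_of_ne hav] at hab
          have := hlt a (Finset.mem_erase.2 ⟨hav, ha⟩)
          omega
        · rw [Function.update_of_ne hbv, Function.update_of_ne hav] at hab
          exact hf1 (Finset.mem_coe.2 (Finset.mem_erase.2 ⟨hav, ha⟩))
            (Finset.mem_coe.2 (Finset.mem_erase.2 ⟨hbv, hb⟩)) hab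
    · intro u hu
      by_cases huv : u = v
      · subst huv
        refine le_trans ?_ hv2
        rw [← Set.ncard_coe_finset]
        refine Set.ncard_le_ncard ?_ (Set.Finite.inter_of_right A.finite_toSet _)
        intro p hp
        have hp' := Finset.mem_filter.1 (Finset.mem_coe.1 hp)
        exact ⟨hp'.2.1, hp'.1⟩
      · refine le_trans (Finset.card_le_card ?_) (hf2 u (Finset.mem_erase.2 ⟨huv, hu⟩))
        intro p hp
        obtain ⟨hp1, hp2, hp3⟩ := Finset.mem_filter.1 hp
        have hu' := hlt u (Finset.mem_erase.2 ⟨huv, hu⟩)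
        have hpv : p ≠ v := by
          rintro rfl
          rw [Function.update_self, Function.update_of_ne huv] at hp3
          omega
        rw [Function.update_of_ne hpv, Function.update_of_ne huv] at hp3
        exact Finset.mem_filter.2 ⟨Finset.mem_erase.2 ⟨hpv, hp1⟩, hp2, hp3⟩

theorem inv_conflict {V κ : Type*} [Fintype V] (P : V → V → Prop) (c : V → V → κ)
    (R : V → Finset κ) (hI : Inv P Finset.univ c R) :
    (∀ y y' q, P y q → P y' q → y ≠ y' → c y q ≠ c y' q) ∧
    (∀ y q q', P y q → P y q' → q ≠ q' → c y q ≠ c y q') ∧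
    (∀ d b q, P d b → P b q → c d b ≠ c b q) ∧
    (∀ d b q z, P b q → P d b → P z q → c d b ≠ c z q) ∧
    (∀ d b q s, P b q → P d b → P q s → c d b ≠ c q s) ∧
    (∀ b q q' z, P b q → P b q' → q ≠ q' → P z q → c b q' ≠ c z q) ∧
    (∀ b q q' s, P b q → P b q' → q ≠ q' → P q s → c b q' ≠ c q s) := by
  have hu : ∀ y p : V, P y p → p ∈ (Finset.univ : Finset V) := fun _ _ _ => Finset.mem_univ _
  refine ⟨fun y y' q h1 h2 h3 => hI.inj y y' q (hu y) (hu y') h1 h2 h3, ?_, ?_, ?_, ?_, ?_, ?_⟩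
  · intro y q q' h1 h2 hne e
    exact hI.cross y q' q (hu y) h2 h1 hne.symm (e ▸ hI.mem y q' (hu y) h2)
  · intro d b q h1 h2 e
    exact Finset.disjoint_left.1 (hI.disj b q (Finset.mem_univ _) h2) (hI.mem d b (hu d) h1)
      (e ▸ hI.mem b q (hu b) h2)
  · intro d b q z h1 h2 h3 e
    exact Finset.disjoint_left.1 (hI.disj b q (Finset.mem_univ _) h1) (hI.mem d b (hu d) h2)
      (e ▸ hI.mem z q (hu z) h3)
  · intro d b q s h1 h2 h3 e
    exact hI.grand b q s (Finset.mem_univ _) h1 h3 (e ▸ hI.mem d b (hu d) h2)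
  · intro b q q' z h1 h2 hne h3 e
    exact hI.cross b q q' (hu b) h1 h2 hne (e ▸ hI.mem z q (hu z) h3)
  · intro b q q' s h1 h2 hne h3
    exact hI.up b q q' s (hu b) h1 h2 hne h3

/-- Every 2-degenerate graph `G` with maximum degree `Δ` satisfies
`χ'_s(G) ≤ 5Δ + 1`. -/
theorem strong_chromatic_index_two_degenerate {V : Type*} [Fintype V] (G : SimpleGraph V)
    (h2 : TwoDegenerate G) :
    strongChromaticIndex G ≤ 5 * G.maxDegree + 1 := by
  apply Nat.sInf_le
  show HasStrongColoring G _
  by_cases hD : G.maxDegree = 0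
  · refine ⟨fun _ => 0, ?_⟩
    intro e he
    exfalso
    induction e with
    | h a b =>
      have h1 : G.Adj a b := he
      have h2 := G.degree_le_maxDegree a
      have h3 : 0 < G.degree a := (G.degree_pos_iff_exists_adj a).2 ⟨b, h1⟩
      omega
  obtain ⟨f, hf1, hf2⟩ := exists_order G h2 Finset.univ
  have hf : Function.Injective f := fun a b hab => hf1 (by simp) (by simp) hab
  let P : V → V → Prop := fun x p => G.Adj x p ∧ f p < f x
  obtain ⟨c, R, hI⟩ := inv_all (κ := Fin (5 * G.maxDegree + 1)) P G.maxDegree (by omega) (by simp)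
    f hf (fun x p h => h.2) (by
      intro x
      refine le_trans (Finset.card_le_card fun p hp => ?_) (hf2 x (Finset.mem_univ x))
      have hp' : P x p := mem_par.1 hp
      exact Finset.mem_filter.2 ⟨Finset.mem_univ p, hp'⟩) (by
      intro x
      refine le_trans ?_ (G.degree_le_maxDegree x)
      rw [← Finset.card_union_of_disjoint, ← G.card_neighborFinset_eq_degree]
      · apply Finset.card_le_card
        intro y hy
        rw [SimpleGraph.mem_neighborFinset]
        rcases Finset.mem_union.1 hy with hy | hy
        · exact (mem_chl.1 hy).1.symm
        · exact (mem_par.1 hy).1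
      · refine Finset.disjoint_left.2 fun y h1 h2 => ?_
        have h3 := (mem_chl.1 h1).2
        have h4 := (mem_par.1 h2).2
        omega)
  obtain ⟨t1, t2, t3, t4, t5, t6, t7⟩ := inv_conflict P c R hI
  let C : Sym2 V → Fin (5 * G.maxDegree + 1) := Sym2.lift ⟨fun a b => if f b < f a then c a b
    else c b a, by
      intro a b
      rcases lt_trichotomy (f a) (f b) with h | h | h
      · simp [h, not_lt.2 h.le]
      · rw [hf h]
      · simp [h, not_lt.2 h.le]⟩
  have hC : ∀ a b, P a b → C s(a, b) = c a b := fun a b h => by simp [C, h.2]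
  have hC' : ∀ a b, P a b → C s(b, a) = c a b := fun a b h => by rw [Sym2.eq_swap]; exact hC a b h
  have tot : ∀ a b, G.Adj a b → P a b ∨ P b a := by
    intro a b h
    rcases lt_trichotomy (f a) (f b) with h' | h' | h'
    · exact Or.inr ⟨h.symm, h'⟩
    · exact absurd (hf h') h.ne
    · exact Or.inl ⟨h, h'⟩
  have adj : ∀ a b d, G.Adj b a → G.Adj b d → a ≠ d → C s(b, a) ≠ C s(b, d) := by
    intro a b d h1 h2 hne
    rcases tot _ _ h1 with h1 | h1 <;> rcases tot _ _ h2 with h2 | h2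
    · rw [hC _ _ h1, hC _ _ h2]; exact t2 b a d h1 h2 hne
    · rw [hC _ _ h1, hC' _ _ h2]; exact (t3 d b a h2 h1).symm
    · rw [hC' _ _ h1, hC _ _ h2]; exact t3 a b d h1 h2
    · rw [hC' _ _ h1, hC' _ _ h2]; exact t1 a d b h1 h2 hne
  have dist' : ∀ a b d z, P b d → G.Adj b a → G.Adj d z → a ≠ d → C s(b, a) ≠ C s(d, z) := by
    intro a b d z hP h1 h2 hne
    rcases tot _ _ h1 with h1 | h1 <;> rcases tot _ _ h2 with h2 | h2
    · rw [hC _ _ h1, hC _ _ h2]; exact t7 b d a z hP h1 hne.symm h2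
    · rw [hC _ _ h1, hC' _ _ h2]; exact t6 b d a z hP h1 hne.symm h2
    · rw [hC' _ _ h1, hC _ _ h2]; exact t5 a b d z hP h1 h2
    · rw [hC' _ _ h1, hC' _ _ h2]; exact t4 a b d z hP h1 h2
  have share : ∀ e ∈ G.edgeSet, ∀ e' ∈ G.edgeSet, e ≠ e' → ∀ v, v ∈ e → v ∈ e' → C e ≠ C e' := by
    intro e he e' he' hne v hv hv'
    obtain ⟨a, rfl⟩ := Sym2.mem_iff_exists.1 hv
    obtain ⟨d, rfl⟩ := Sym2.mem_iff_exists.1 hv'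
    exact adj a v d he he' (fun h => hne (by rw [h]))
  refine ⟨C, ?_⟩
  rintro e he e' he' ⟨hne, ⟨v, hv, hv'⟩ | ⟨m, hm, ⟨v, hv, hvm⟩, ⟨w, hw, hwm⟩⟩⟩
  · exact share e he e' he' hne v hv hv'
  by_cases hs : ∃ u, u ∈ e ∧ u ∈ e'
  · obtain ⟨u, h1, h2⟩ := hs
    exact share e he e' he' hne u h1 h2
  have hvw : v ≠ w := by
    rintro rfl
    exact hs ⟨v, hv, hw⟩
  obtain rfl : m = s(v, w) := (Sym2.mem_and_mem_iff hvw).1 ⟨hvm, hwm⟩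
  obtain ⟨a, rfl⟩ := Sym2.mem_iff_exists.1 hv
  obtain ⟨d, rfl⟩ := Sym2.mem_iff_exists.1 hw
  have haw : a ≠ w := by
    rintro rfl
    exact hs ⟨a, by simp, by simp⟩
  have hdv : d ≠ v := by
    rintro rfl
    exact hs ⟨d, by simp, by simp⟩
  rcases tot v w hm with h | h
  · exact dist' a v w d h he he' haw
  · exact (dist' d w v a h he' he hdv).symm

end StrongEC
end

section
/- Let Δ ≥ 9 be an integer. Every finite simple graph G with maximum average degree Mad(G) < 8/3 and maximum degree at most Δ satisfies χ'_s(G) ≤ 3Δ − 3. -/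
open scoped Classical

namespace StrongEC

/-- The maximum average degree of a finite graph `G`: the supremum over nonempty vertex
subsets `A` of `2 * e(A) / |A|`, where `e(A)` is the number of edges of `G` inside `A`
(this equals the maximum of `2|E(H)|/|V(H)|` over all subgraphs `H` with at least one
vertex). -/
noncomputable def mad {V : Type*} (G : SimpleGraph V) : ℝ :=
  sSup {x : ℝ | ∃ A : Finset V, A.Nonempty ∧
    x = 2 * ({e ∈ G.edgeSet | ∀ v ∈ e, v ∈ A}.ncard : ℝ) / (A.card : ℝ)}

section Helpers

set_option linter.unusedSectionVars false
set_option linter.unusedVariables false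

variable {V : Type*} [Fintype V]

/-- Neighbours of `v`. -/
noncomputable def nb (G : SimpleGraph V) (v : V) : Finset V :=
  Finset.univ.filter (fun w => G.Adj v w)

/-- Degree of `v`. -/
noncomputable def dg (G : SimpleGraph V) (v : V) : ℕ := (nb G v).card

/-- Edges incident with `v`. -/
noncomputable def inc (G : SimpleGraph V) (v : V) : Finset (Sym2 V) :=
  (nb G v).image (fun w => s(v, w))

/-- `C` is a valid partial strong coloring of `G` on the set `E` of edges. -/
def Col (G : SimpleGraph V) {K : ℕ} (E : Set (Sym2 V)) (C : Sym2 V → Fin K) : Prop :=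
  ∀ e ∈ E, ∀ e' ∈ E, Conflict G e e' → C e ≠ C e'

theorem mem_nb {G : SimpleGraph V} {v w : V} : w ∈ nb G v ↔ G.Adj v w := by
  simp [nb]

theorem mem_inc {G : SimpleGraph V} {v : V} {e : Sym2 V} :
    e ∈ inc G v ↔ e ∈ G.edgeSet ∧ v ∈ e := by
  induction e with
  | _ a b =>
    simp only [inc, Finset.mem_image, mem_nb, SimpleGraph.mem_edgeSet, Sym2.mem_iff]
    constructor
    · rintro ⟨w, h, he⟩
      rw [Sym2.eq_iff] at he
      rcases he with ⟨rfl, rfl⟩ | ⟨rfl, rfl⟩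
      · exact ⟨h, Or.inl rfl⟩
      · exact ⟨h.symm, Or.inr rfl⟩
    · rintro ⟨h, rfl | rfl⟩
      · exact ⟨b, h, rfl⟩
      · exact ⟨a, h.symm, Sym2.eq_swap⟩

theorem card_inc_le (G : SimpleGraph V) (v : V) : (inc G v).card ≤ dg G v :=
  Finset.card_image_le

theorem card_inc (G : SimpleGraph V) (v : V) : (inc G v).card = dg G v := by
  apply Finset.card_image_of_injective
  intro a b h
  simp at h
  rcases h with h | ⟨h1, h2⟩
  · exact h
  · rw [h2, h1]

theorem edge_at {G : SimpleGraph V} {e : Sym2 V} {v : V} (he : e ∈ G.edgeSet) (hv : v ∈ e) :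
    ∃ w, G.Adj v w ∧ e = s(v, w) := by
  have := mem_inc.2 ⟨he, hv⟩
  simp only [inc, Finset.mem_image, mem_nb] at this
  obtain ⟨w, h1, h2⟩ := this
  exact ⟨w, h1, h2.symm⟩

/-- A vertex of degree one has a unique neighbour. -/
theorem deg_one_unique {G : SimpleGraph V} {q a b : V} (hq : dg G q = 1) (ha : G.Adj q a)
    (hb : G.Adj q b) : a = b := by
  rw [dg, Finset.card_eq_one] at hq
  obtain ⟨c, hc⟩ := hq
  have h1 := mem_nb.2 ha
  have h2 := mem_nb.2 hb
  rw [hc] at h1 h2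
  simp at h1 h2
  rw [h1, h2]

theorem Conflict.symm' {G : SimpleGraph V} {e e' : Sym2 V} (h : Conflict G e e') :
    Conflict G e' e := by
  obtain ⟨h1, h2⟩ := h
  refine ⟨h1.symm, ?_⟩
  rcases h2 with ⟨v, a, b⟩ | ⟨f, hf, a, b⟩
  · exact Or.inl ⟨v, b, a⟩
  · exact Or.inr ⟨f, hf, b, a⟩

theorem conf_cases {G : SimpleGraph V} {a b : V} {e' : Sym2 V}
    (he' : e' ∈ G.edgeSet) (h : Conflict G s(a, b) e') :
    ∃ w ∈ e', (G.Adj a w ∧ w ≠ b) ∨ (G.Adj b w ∧ w ≠ a) := by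
  obtain ⟨hne, h⟩ := h
  have key : a ∈ e' ∨ b ∈ e' → ∃ w ∈ e', (G.Adj a w ∧ w ≠ b) ∨ (G.Adj b w ∧ w ≠ a) := by
    rintro (h | h)
    · obtain ⟨c, hc, rfl⟩ := edge_at he' h
      refine ⟨c, by simp, Or.inl ⟨hc, ?_⟩⟩
      rintro rfl; exact hne rfl
    · obtain ⟨c, hc, rfl⟩ := edge_at he' h
      refine ⟨c, by simp, Or.inr ⟨hc, ?_⟩⟩
      rintro rfl; exact hne Sym2.eq_swap
  by_cases hk : a ∈ e' ∨ b ∈ e'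
  · exact key hk
  · push Not at hk
    rcases h with ⟨v, h1, h2⟩ | ⟨f, hf, ⟨v, h1, h2⟩, ⟨w, h3, h4⟩⟩
    · simp at h1
      rcases h1 with rfl | rfl
      · exact absurd h2 hk.1
      · exact absurd h2 hk.2
    · simp at h1
      obtain ⟨c, hc, rfl⟩ := edge_at hf h2
      simp at h4
      refine ⟨w, h3, ?_⟩
      have hwa : w ≠ a := by rintro rfl; exact hk.1 h3
      have hwb : w ≠ b := by rintro rfl; exact hk.2 h3
      rcases h1 with rfl | rfl
      · left
        rcases h4 with rfl | rfl
        · exact absurd rfl hwa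
        · exact ⟨hc, hwb⟩
      · right
        rcases h4 with rfl | rfl
        · exact absurd rfl hwb
        · exact ⟨hc, hwa⟩

theorem conf_intro {G : SimpleGraph V} {a b w : V} {e' : Sym2 V} (hab : G.Adj a b)
    (hne : s(a, b) ≠ e') (hw : w ∈ e') (h : G.Adj a w) : Conflict G s(a, b) e' :=
  ⟨hne, Or.inr ⟨s(a, w), h, ⟨a, by simp, by simp⟩, ⟨w, hw, by simp⟩⟩⟩

theorem conf_share {G : SimpleGraph V} {e e' : Sym2 V} {v : V} (hne : e ≠ e') (h1 : v ∈ e)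
    (h2 : v ∈ e') : Conflict G e e' := ⟨hne, Or.inl ⟨v, h1, h2⟩⟩

/-- Conflicts of a pendant edge. -/
theorem conf_pend {G : SimpleGraph V} {u q : V} {e' : Sym2 V} (hq : dg G q = 1)
    (hu : G.Adj u q) (he' : e' ∈ G.edgeSet) (h : Conflict G s(u, q) e') :
    ∃ w ∈ e', G.Adj u w ∧ w ≠ q := by
  obtain ⟨w, hw, h | h⟩ := conf_cases he' h
  · exact ⟨w, hw, h⟩
  · exact absurd (deg_one_unique hq h.1 hu.symm) h.2

variable {G : SimpleGraph V} {K : ℕ}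

theorem Col.mono {E E' : Set (Sym2 V)} {C : Sym2 V → Fin K} (h : Col G E C) (hs : E' ⊆ E) :
    Col G E' C := fun e he e' he' => h e (hs he) e' (hs he')

theorem Col.insert {E : Set (Sym2 V)} {C : Sym2 V → Fin K} {e : Sym2 V} (h : Col G E C)
    (h2 : ∀ e' ∈ E, Conflict G e e' → C e' ≠ C e) : Col G (insert e E) C := by
  rintro a (rfl | ha) b (rfl | hb) hab
  · exact absurd rfl hab.1
  · exact (h2 b hb hab).symm
  · exact h2 a ha hab.symm'
  · exact h a ha b hb hab

theorem Col.congr {E : Set (Sym2 V)} {C C' : Sym2 V → Fin K} (h : Col G E C)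
    (h2 : ∀ e ∈ E, C' e = C e) : Col G E C' := by
  intro a ha b hb hab
  rw [h2 a ha, h2 b hb]
  exact h a ha b hb hab

theorem Col.update {E : Set (Sym2 V)} {C : Sym2 V → Fin K} {e : Sym2 V} {c : Fin K}
    (h : Col G E C) (he : e ∉ E)
    (h2 : ∀ e' ∈ E, Conflict G e e' → C e' ≠ c) :
    Col G (Insert.insert e E) (Function.update C e c) := by
  have hag : ∀ e' ∈ E, Function.update C e c e' = C e' := by
    intro e' he'
    apply Function.update_of_ne
    rintro rfl; exact he he'
  apply Col.insert (h.congr hag)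
  intro e' he' hc
  rw [hag e' he', Function.update_self]
  exact h2 e' he' hc

/-- Greedy extension by one edge. -/
theorem Col.ext1 {E : Set (Sym2 V)} {C : Sym2 V → Fin K} (e : Sym2 V) (B : Finset (Sym2 V))
    (h : Col G E C) (hB : B.card < K)
    (h2 : ∀ e' ∈ E, Conflict G e e' → e' ∈ B) :
    ∃ C' : Sym2 V → Fin K, (∀ e' ∈ E, C' e' = C e') ∧ Col G (Insert.insert e E) C' := by
  by_cases he : e ∈ E
  · exact ⟨C, fun _ _ => rfl, by rwa [Set.insert_eq_of_mem he]⟩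
  have : ∃ c : Fin K, c ∉ B.image C := by
    by_contra hcon
    push Not at hcon
    have h1 : (Finset.univ : Finset (Fin K)) ⊆ B.image C := fun c _ => hcon c
    have h3 := Finset.card_le_card h1
    have h4 := Finset.card_image_le (s := B) (f := C)
    simp at h3
    omega
  obtain ⟨c, hc⟩ := this
  refine ⟨Function.update C e c, ?_, h.update he ?_⟩
  · intro e' he'
    apply Function.update_of_ne
    rintro rfl; exact he he'
  · rintro e' he' hcf rfl
    exact hc (Finset.mem_image_of_mem _ (h2 e' he' hcf))

/-- Greedy extension by a set of edges. -/
theorem Col.ext {E : Set (Sym2 V)} {C : Sym2 V → Fin K} (T : Finset (Sym2 V))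
    (h : Col G E C)
    (h2 : ∀ e ∈ T, ∃ B : Finset (Sym2 V), B.card < K ∧
      ∀ e' ∈ E ∪ T, Conflict G e e' → e' ∈ B) :
    ∃ C' : Sym2 V → Fin K, (∀ e' ∈ E, C' e' = C e') ∧ Col G (E ∪ T) C' := by
  induction T using Finset.induction_on with
  | empty => exact ⟨C, fun _ _ => rfl, by simpa using h⟩
  | insert e T he ih =>
    obtain ⟨C', h3, h4⟩ := ih (by
      intro e1 he1
      obtain ⟨B, hB, hB2⟩ := h2 e1 (Finset.mem_insert_of_mem he1)
      refine ⟨B, hB, fun e' he' => hB2 e' ?_⟩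
      rcases he' with h | h
      · exact Or.inl h
      · exact Or.inr (by simpa using Or.inr h))
    obtain ⟨B, hB, hB2⟩ := h2 e (Finset.mem_insert_self _ _)
    obtain ⟨C'', h5, h6⟩ := h4.ext1 e B hB (by
      intro e' he'
      apply hB2 e'
      rcases he' with h | h
      · exact Or.inl h
      · exact Or.inr (by simpa using Or.inr h))
    refine ⟨C'', fun e' he' => by rw [h5 e' (Or.inl he'), h3 e' he'], ?_⟩
    convert h6 using 1
    ext x; simp

/-- Extension counting colors. -/
theorem Col.extColors {E : Set (Sym2 V)} {C : Sym2 V → Fin K} (T : Finset (Sym2 V))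
    (Q : Finset (Fin K)) (h : Col G E C) (hc : Q.card + T.card ≤ K)
    (h2 : ∀ e ∈ T, ∀ e' ∈ E, Conflict G e e' → C e' ∈ Q) :
    ∃ C' : Sym2 V → Fin K, (∀ e' ∈ E, C' e' = C e') ∧ Col G (E ∪ T) C' := by
  induction T using Finset.induction_on with
  | empty => exact ⟨C, fun _ _ => rfl, by simpa using h⟩
  | insert e T he ih =>
    rw [Finset.card_insert_of_notMem he] at hc
    obtain ⟨C', h3, h4⟩ := ih (by omega) (fun e1 he1 => h2 e1 (Finset.mem_insert_of_mem he1))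
    by_cases heE : e ∈ E ∪ (T : Set (Sym2 V))
    · refine ⟨C', h3, ?_⟩
      convert h4 using 1
      ext x
      simp only [Finset.coe_insert, Set.mem_union, Set.mem_insert_iff] at heE ⊢
      constructor
      · rintro (h | rfl | h)
        · exact Or.inl h
        · exact heE
        · exact Or.inr h
      · tauto
    have : ∃ c : Fin K, c ∉ Q ∪ T.image C' := by
      by_contra hcon
      push Not at hcon
      have h1 : (Finset.univ : Finset (Fin K)) ⊆ Q ∪ T.image C' := fun c _ => hcon c
      have h3 := Finset.card_le_card h1
      have h4 := Finset.card_image_le (s := T) (f := C')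
      have h5 := Finset.card_union_le Q (T.image C')
      simp at h3
      omega
    obtain ⟨c, hcc⟩ := this
    have hup := h4.update (c := c) heE (by
      rintro e' (he' | he') hcf rfl
      · apply hcc
        rw [h3 e' he']
        exact Finset.mem_union_left _ (h2 e (Finset.mem_insert_self _ _) e' he' hcf)
      · exact hcc (Finset.mem_union_right _ (Finset.mem_image_of_mem _ he')))
    refine ⟨Function.update C' e c, ?_, ?_⟩
    · intro e' he'
      rw [Function.update_of_ne, h3 e' he']
      rintro rfl; exact heE (Or.inl he')
    · convert hup using 1
      ext x; simp

/-- Swapping the color of an edge `ab` with the color of a pendant edge `bq`. -/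
theorem Col.swap {E : Set (Sym2 V)} {C : Sym2 V → Fin K} {a b q : V} (h : Col G E C)
    (hE : E ⊆ G.edgeSet) (hq : dg G q = 1) (hab : s(a, b) ∈ E) (hbq : s(b, q) ∈ E)
    (haq : a ≠ q)
    (hfar : ∀ w, G.Adj a w → w ≠ b → ∀ e ∈ E, w ∈ e → e ≠ s(a, b) → C e ≠ C s(b, q)) :
    Col G E (C ∘ Equiv.swap s(a, b) s(b, q)) := by
  have hGab : G.Adj a b := hE hab
  have hGbq : G.Adj b q := hE hbq
  have hne : s(a, b) ≠ s(b, q) := by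
    intro hh
    rw [Sym2.eq_iff] at hh
    rcases hh with ⟨rfl, rfl⟩ | ⟨rfl, _⟩
    · exact haq rfl
    · exact haq rfl
  have hcd : C s(a, b) ≠ C s(b, q) := h _ hab _ hbq (conf_share hne (v := b) (by simp) (by simp))
  set E' : Set (Sym2 V) := E \ {s(a, b), s(b, q)} with hE'
  have hEE : E = Insert.insert s(a, b) (Insert.insert s(b, q) E') := by
    ext x; simp only [hE', Set.mem_insert_iff, Set.mem_sdiff, Set.mem_singleton_iff]
    constructor
    · tauto
    · rintro (rfl | rfl | h) <;> tauto
  have hval : ∀ e ∈ E', (C ∘ Equiv.swap s(a, b) s(b, q)) e = C e := by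
    intro e he
    simp only [hE', Set.mem_sdiff, Set.mem_insert_iff, Set.mem_singleton_iff, not_or] at he
    simp [Equiv.swap_apply_of_ne_of_ne he.2.1 he.2.2]
  have h1 : (C ∘ Equiv.swap s(a, b) s(b, q)) s(a, b) = C s(b, q) := by simp
  have h2 : (C ∘ Equiv.swap s(a, b) s(b, q)) s(b, q) = C s(a, b) := by simp
  have h0 : Col G E' (C ∘ Equiv.swap s(a, b) s(b, q)) :=
    (h.mono Set.sdiff_subset).congr hval
  rw [hEE]
  apply Col.insert
  · apply Col.insert h0
    intro e' he' hcf
    rw [h2, hval e' he']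
    have hm : e' ∈ E ∧ ¬ (e' = s(a, b) ∨ e' = s(b, q)) := he'
    obtain ⟨w, hw, h3, h4⟩ := conf_pend hq hGbq (hE hm.1) hcf
    apply h _ hm.1 _ hab
    apply Conflict.symm'
    rw [Sym2.eq_swap]
    apply conf_intro hGab.symm _ hw h3
    rw [Sym2.eq_swap]
    exact fun hh => hm.2 (Or.inl hh.symm)
  · rintro e' (rfl | he') hcf
    · rw [h1, h2]; exact hcd
    · rw [h1, hval e' he']
      have hm : e' ∈ E ∧ ¬ (e' = s(a, b) ∨ e' = s(b, q)) := he'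
      obtain ⟨w, hw, ⟨h3, h4⟩ | ⟨h3, h4⟩⟩ := conf_cases (hE hm.1) hcf
      · exact hfar w h3 h4 e' hm.1 hw (fun hh => hm.2 (Or.inl hh))
      · apply h _ hm.1 _ hbq
        apply Conflict.symm'
        apply conf_intro hGbq _ hw h3
        exact fun hh => hm.2 (Or.inr hh.symm)

/-- Deleting pendant edges. -/
theorem col_delete_pend {T : Set (Sym2 V)} {C : Sym2 V → Fin K}
    (hT : ∀ e ∈ T, ∃ v ∈ e, dg G v = 1) (h : IsStrongColoring (G.deleteEdges T) C) :
    Col G (G.edgeSet \ T) C := by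
  intro e he e' he' hcf
  apply h e (by simpa using he) e' (by simpa using he')
  refine ⟨hcf.1, ?_⟩
  rcases hcf.2 with h1 | ⟨f, hf, ⟨v, hv1, hv2⟩, ⟨w, hw1, hw2⟩⟩
  · exact Or.inl h1
  · by_cases hvw : v = w
    · subst hvw; exact Or.inl ⟨v, hv1, hw1⟩
    · right
      refine ⟨f, ?_, ⟨v, hv1, hv2⟩, ⟨w, hw1, hw2⟩⟩
      rw [SimpleGraph.edgeSet_deleteEdges]
      refine ⟨hf, fun hfT => ?_⟩
      obtain ⟨x, hx, hx1⟩ := hT f hfT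
      have hfe : f = s(v, w) := ((Sym2.mem_and_mem_iff hvw).1 ⟨hv2, hw2⟩)
      subst hfe
      have key : ∀ g ∈ G.edgeSet, x ∈ g → g = s(v, w) := by
        intro g hg hxg
        obtain ⟨c, hc, rfl⟩ := edge_at hg hxg
        obtain ⟨d, hd, hd2⟩ := edge_at hf hx
        rw [hd2, deg_one_unique hx1 hc hd]
      simp at hx
      rcases hx with rfl | rfl
      · exact he.2 (by rw [key e he.1 hv1]; exact hfT)
      · exact he'.2 (by rw [key e' he'.1 hw1]; exact hfT)

/-- Minimal counterexample data. -/
structure MinCE (G : SimpleGraph V) (D : ℕ) : Prop where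
  hD : 9 ≤ D
  hdeg : ∀ v, dg G v ≤ D
  hno : ¬ HasStrongColoring G (3 * D - 3)
  hsub : ∀ H < G, HasStrongColoring H (3 * D - 3)

/-- `v` is rich. -/
def Rich (G : SimpleGraph V) (D : ℕ) (v : V) : Prop := 3 * D - 2 ≤ ∑ w ∈ nb G v, dg G w

theorem MinCE.done {D : ℕ} (M : MinCE G D) {C : Sym2 V → Fin (3 * D - 3)} {E : Set (Sym2 V)}
    (h : Col G E C) (hE : G.edgeSet ⊆ E) : False :=
  M.hno ⟨C, h.mono hE⟩

theorem MinCE.delete {D : ℕ} (M : MinCE G D) (T : Set (Sym2 V)) {e : Sym2 V} (he : e ∈ T)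
    (heG : e ∈ G.edgeSet) :
    ∃ C : Sym2 V → Fin (3 * D - 3), IsStrongColoring (G.deleteEdges T) C := by
  apply M.hsub
  refine lt_of_le_of_ne (SimpleGraph.deleteEdges_le _) ?_
  intro h
  have : e ∈ (G.deleteEdges T).edgeSet := by rw [h]; exact heG
  rw [SimpleGraph.edgeSet_deleteEdges] at this
  exact this.2 he

theorem MinCE.deletePend {D : ℕ} (M : MinCE G D) (T : Set (Sym2 V)) {e : Sym2 V} (he : e ∈ T)
    (heG : e ∈ G.edgeSet) (hT : ∀ e ∈ T, ∃ v ∈ e, dg G v = 1) :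
    ∃ C : Sym2 V → Fin (3 * D - 3), Col G (G.edgeSet \ T) C := by
  obtain ⟨C, hC⟩ := M.delete T he heG
  exact ⟨C, col_delete_pend hT hC⟩

theorem MinCE.pend_rich {D : ℕ} (M : MinCE G D) {v q : V} (hvq : G.Adj v q)
    (hq : dg G q = 1) : Rich G D v := by
  by_contra hr
  unfold Rich at hr
  obtain ⟨C, hC⟩ := M.deletePend {s(v, q)} (e := s(v, q)) rfl hvq
    (by rintro e rfl; exact ⟨q, by simp, hq⟩)
  have hcard : (((nb G v).erase q).biUnion (inc G)).card < 3 * D - 3 := by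
    have h1 : (((nb G v).erase q).biUnion (inc G)).card ≤ ∑ w ∈ (nb G v).erase q, dg G w :=
      Finset.card_biUnion_le.trans (Finset.sum_le_sum (fun w _ => card_inc_le G w))
    have h2 := Finset.add_sum_erase (nb G v) (dg G) (mem_nb.2 hvq)
    have := M.hD
    omega
  obtain ⟨C', _, h'⟩ := hC.ext1 s(v, q) _ hcard (by
    intro e' he' hcf
    obtain ⟨w, hw, h1, h2⟩ := conf_pend hq hvq he'.1 hcf
    simp only [Finset.mem_biUnion, Finset.mem_erase]
    exact ⟨w, ⟨h2, mem_nb.2 h1⟩, mem_inc.2 ⟨he'.1, hw⟩⟩)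
  apply M.done h'
  intro e he
  by_cases h : e = s(v, q)
  · exact Or.inl h
  · exact Or.inr ⟨he, h⟩

/-- Main light configuration: `a` has degree 2 or 3, all its neighbours but `u` have degree 2. -/
theorem MinCE.light {D : ℕ} (M : MinCE G D) {a u : V} (hau : G.Adj a u) (ha2 : 2 ≤ dg G a)
    (ha3 : dg G a ≤ 3) (hb : ∀ b, G.Adj a b → b ≠ u → dg G b = 2) :
    Rich G D u ∧ ∀ q1 q2, G.Adj u q1 → G.Adj u q2 → dg G q1 = 1 → dg G q2 = 1 → q1 = q2 := by
  have hD := M.hD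
  set T : Set (Sym2 V) := {e | e ∈ G.edgeSet ∧ a ∈ e ∧ e ≠ s(a, u)} with hTdef
  have hex : ∃ b, G.Adj a b ∧ b ≠ u := by
    by_contra hcon
    push Not at hcon
    have : nb G a ⊆ {u} := fun b hb => by simpa using hcon b (mem_nb.1 hb)
    have := Finset.card_le_card this
    simp [dg] at ha2 this
    omega
  obtain ⟨b0, hab0, hb0u⟩ := hex
  obtain ⟨C, hC⟩ := M.delete T (e := s(a, b0)) ⟨hab0, by simp, by
    intro h; rw [Sym2.eq_iff] at h; rcases h with h | h
    · exact hb0u h.2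
    · exact hau.ne h.1⟩ hab0
  set H := G.deleteEdges T with hH
  have hHE : H.edgeSet = G.edgeSet \ T := by rw [hH, SimpleGraph.edgeSet_deleteEdges]
  have hHa : ∀ e ∈ H.edgeSet, a ∈ e → e = s(a, u) := by
    intro e he hae
    rw [hHE] at he
    by_contra h
    exact he.2 ⟨he.1, hae, h⟩
  have hHu : ∀ e ∈ G.edgeSet, u ∈ e → e ∈ H.edgeSet := by
    intro e he hue
    rw [hHE]
    refine ⟨he, fun h => h.2.2 ?_⟩
    exact ((Sym2.mem_and_mem_iff hau.ne).1 ⟨h.2.1, hue⟩)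
  have hau' : s(a, u) ∈ H.edgeSet := hHu _ hau (by simp)
  -- transfer to the full graph
  have transfer : ∀ C : Sym2 V → Fin (3 * D - 3), IsStrongColoring H C →
      Col G (H.edgeSet \ {s(a, u)}) C := by
    intro C hC e he e' he' hcf
    apply hC e he.1 e' he'.1
    refine ⟨hcf.1, ?_⟩
    rcases hcf.2 with h1 | ⟨f, hf, ⟨v, hv1, hv2⟩, ⟨w, hw1, hw2⟩⟩
    · exact Or.inl h1
    · by_cases hvw : v = w
      · subst hvw; exact Or.inl ⟨v, hv1, hw1⟩
      · right
        refine ⟨f, ?_, ⟨v, hv1, hv2⟩, ⟨w, hw1, hw2⟩⟩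
        rw [hHE]
        refine ⟨hf, fun hfT => ?_⟩
        have hfe : f = s(v, w) := ((Sym2.mem_and_mem_iff hvw).1 ⟨hv2, hw2⟩)
        have := hfT.2.1
        rw [hfe] at this
        simp at this
        rcases this with rfl | rfl
        · exact he.2 (hHa e he.1 hv1)
        · exact he'.2 (hHa e' he'.1 hw1)
  -- the edges seen through `a`
  set Bad : Finset (Sym2 V) := ((nb G a).erase u).biUnion (fun b => (inc G b).erase s(a, b))
    with hBad
  have hBadcard : Bad.card ≤ dg G a - 1 := by
    have h1 : Bad.card ≤ ∑ b ∈ (nb G a).erase u, 1 := by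
      refine Finset.card_biUnion_le.trans (Finset.sum_le_sum ?_)
      intro b hb'
      simp only [Finset.mem_erase, mem_nb] at hb'
      have h2 : s(a, b) ∈ inc G b := mem_inc.2 ⟨hb'.2, by simp⟩
      rw [Finset.card_erase_of_mem h2, card_inc, hb b hb'.2 hb'.1]
    rw [Finset.sum_const, Finset.card_erase_of_mem (mem_nb.2 hau)] at h1
    simpa [dg] using h1
  have hBadmem : ∀ e ∈ H.edgeSet, e ≠ s(a, u) → ∀ b ∈ e, G.Adj a b → b ≠ u → e ∈ Bad := by
    intro e he hne b hbe hab hbu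
    simp only [hBad, Finset.mem_biUnion, Finset.mem_erase, mem_nb]
    rw [hHE] at he
    refine ⟨b, ⟨hbu, hab⟩, ?_, mem_inc.2 ⟨he.1, hbe⟩⟩
    rintro rfl
    exact he.2 ⟨hab, by simp, hne⟩
  -- finishing
  have finish : ∀ C : Sym2 V → Fin (3 * D - 3), Col G H.edgeSet C → False := by
    intro C hC
    obtain ⟨C', _, h'⟩ := hC.ext (((nb G a).erase u).image (fun b => s(a, b))) (by
      intro e he
      simp only [Finset.mem_image, Finset.mem_erase, mem_nb] at he
      obtain ⟨b, ⟨hbu, hab⟩, rfl⟩ := he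
      refine ⟨inc G u ∪ ((nb G a).erase u |>.erase b).biUnion (inc G) ∪
        ((nb G b).erase a).biUnion (inc G), ?_, ?_⟩
      · have h1 := card_inc_le G u
        have h1' := M.hdeg u
        have h2 : (((nb G a).erase u |>.erase b).biUnion (inc G)).card ≤ 2 := by
          refine Finset.card_biUnion_le.trans ?_
          have : ∑ w ∈ (nb G a).erase u |>.erase b, (inc G w).card ≤
              ∑ w ∈ (nb G a).erase u |>.erase b, 2 := by
            refine Finset.sum_le_sum ?_
            intro w hw
            simp only [Finset.mem_erase, mem_nb] at hw
            rw [card_inc, hb w hw.2.2 hw.2.1]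
          refine this.trans ?_
          rw [Finset.sum_const, Finset.card_erase_of_mem
            (Finset.mem_erase.2 ⟨hbu, mem_nb.2 hab⟩), Finset.card_erase_of_mem (mem_nb.2 hau)]
          simp only [dg] at ha3
          simp only [smul_eq_mul]
          omega
        have h3 : (((nb G b).erase a).biUnion (inc G)).card ≤ D := by
          refine Finset.card_biUnion_le.trans ?_
          have : ∑ w ∈ (nb G b).erase a, (inc G w).card ≤ ∑ w ∈ (nb G b).erase a, D :=
            Finset.sum_le_sum (fun w _ => (card_inc_le G w).trans (M.hdeg w))
          refine this.trans ?_
          have h4 := hb b hab hbu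
          rw [dg] at h4
          rw [Finset.sum_const, Finset.card_erase_of_mem (mem_nb.2 hab.symm), h4]
          simp
        have h4 := Finset.card_union_le (inc G u ∪ ((nb G a).erase u |>.erase b).biUnion (inc G))
          (((nb G b).erase a).biUnion (inc G))
        have h5 := Finset.card_union_le (inc G u) (((nb G a).erase u |>.erase b).biUnion (inc G))
        omega
      · intro e' he' hcf
        have heG : e' ∈ G.edgeSet := by
          rcases he' with h | h
          · rw [hHE] at h; exact h.1
          · simp at h
            obtain ⟨c, hc, rfl⟩ := h
            exact mem_nb.1 hc.1
        obtain ⟨w, hw, ⟨h3, h4⟩ | ⟨h3, h4⟩⟩ := conf_cases heG hcf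
        · by_cases hwu : w = u
          · subst hwu
            exact Finset.mem_union_left _ (Finset.mem_union_left _ (mem_inc.2 ⟨heG, hw⟩))
          · refine Finset.mem_union_left _ (Finset.mem_union_right _ ?_)
            simp only [Finset.mem_biUnion, Finset.mem_erase, mem_nb]
            exact ⟨w, ⟨h4, hwu, h3⟩, mem_inc.2 ⟨heG, hw⟩⟩
        · refine Finset.mem_union_right _ ?_
          simp only [Finset.mem_biUnion, Finset.mem_erase, mem_nb]
          exact ⟨w, ⟨h4, h3⟩, mem_inc.2 ⟨heG, hw⟩⟩)
    apply M.done h'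
    intro e he
    by_cases h : e ∈ H.edgeSet
    · exact Or.inl h
    · right
      have : e ∈ T := by
        rw [hHE] at h
        by_contra hh
        exact h ⟨he, hh⟩
      obtain ⟨_, hae, hne⟩ := this
      obtain ⟨c, hc, rfl⟩ := edge_at he hae
      simp
      refine ⟨c, ⟨mem_nb.2 hc, ?_⟩, Or.inl rfl⟩
      rintro rfl; exact hne rfl
  have hins : Insert.insert s(a, u) (H.edgeSet \ {s(a, u)}) = H.edgeSet := by
    ext x; simp only [Set.mem_insert_iff, Set.mem_sdiff, Set.mem_singleton_iff]
    constructor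
    · rintro (rfl | h)
      · exact hau'
      · exact h.1
    · tauto
  constructor
  · by_contra hr
    unfold Rich at hr
    have h1 := (transfer C hC).ext1 s(a, u) (((nb G u).erase a).biUnion (inc G) ∪ Bad) (by
      have h1 : (((nb G u).erase a).biUnion (inc G)).card ≤ ∑ w ∈ (nb G u).erase a, dg G w :=
        Finset.card_biUnion_le.trans (Finset.sum_le_sum (fun w _ => card_inc_le G w))
      have h2 := Finset.add_sum_erase (nb G u) (dg G) (mem_nb.2 hau.symm)
      have h3 := Finset.card_union_le (((nb G u).erase a).biUnion (inc G)) Bad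
      omega) (by
      intro e' he' hcf
      have heG : e' ∈ G.edgeSet := by
        have := he'.1
        rw [hHE] at this; exact this.1
      obtain ⟨w, hw, ⟨h3, h4⟩ | ⟨h3, h4⟩⟩ := conf_cases heG hcf
      · exact Finset.mem_union_right _ (hBadmem e' he'.1 he'.2 w hw h3 h4)
      · refine Finset.mem_union_left _ ?_
        simp only [Finset.mem_biUnion, Finset.mem_erase, mem_nb]
        exact ⟨w, ⟨h4, h3⟩, mem_inc.2 ⟨heG, hw⟩⟩)
    obtain ⟨C', _, h'⟩ := h1
    rw [hins] at h'
    exact finish C' h'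
  · intro q1 q2 hq1 hq2 hd1 hd2
    by_contra hne
    -- coloring good at `a u`
    have good : ∀ C : Sym2 V → Fin (3 * D - 3), IsStrongColoring H C →
        C s(a, u) ∉ Bad.image C → False := by
      intro C hC hnb
      apply finish C
      rw [← hins]
      apply (transfer C hC).insert
      intro e' he' hcf hceq
      have heG : e' ∈ G.edgeSet := by
        have := he'.1
        rw [hHE] at this; exact this.1
      obtain ⟨w, hw, ⟨h3, h4⟩ | ⟨h3, h4⟩⟩ := conf_cases heG hcf
      · apply hnb
        rw [← hceq]
        exact Finset.mem_image_of_mem _ (hBadmem e' he'.1 he'.2 w hw h3 h4)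
      · have hHuw : H.Adj u w := hHu s(u, w) h3 (by simp)
        have hHua : H.Adj u a := SimpleGraph.Adj.symm hau'
        refine hC _ hau' _ he'.1 ?_ hceq.symm
        rw [Sym2.eq_swap]
        apply conf_intro hHua _ hw hHuw
        rw [Sym2.eq_swap]
        exact fun h => he'.2 h.symm
    have haq : ∀ q, G.Adj u q → dg G q = 1 → a ≠ q := by
      rintro q _ h rfl; omega
    have swapgood : ∀ q, G.Adj u q → dg G q = 1 → C s(u, q) ∉ Bad.image C → False := by
      intro q hq hdq hnb
      have hqe : s(u, q) ∈ H.edgeSet := hHu _ hq (by simp)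
      have hdqH : dg H q = 1 := by
        have h1 : nb H q ⊆ nb G q := fun w hw => mem_nb.2 (SimpleGraph.deleteEdges_le _ (mem_nb.1 hw))
        have h2 := Finset.card_le_card h1
        have h3 : 0 < (nb H q).card := Finset.card_pos.2 ⟨u, mem_nb.2 (SimpleGraph.Adj.symm hqe)⟩
        simp only [dg] at hdq ⊢
        omega
      have hC' : Col H H.edgeSet (C ∘ Equiv.swap s(a, u) s(u, q)) := by
        apply Col.swap hC (le_refl _) hdqH hau' hqe (haq q hq hdq)
        intro w hw hwu
        exfalso
        have := hHa s(a, w) hw (by simp)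
        rw [Sym2.eq_iff] at this
        rcases this with h | h
        · exact hwu h.2
        · exact hau.ne h.1
      apply good _ hC'
      have himg : Bad.image (C ∘ Equiv.swap s(a, u) s(u, q)) = Bad.image C := by
        apply Finset.image_congr
        intro e he
        simp only [hBad, Finset.coe_biUnion, Set.mem_iUnion, Finset.mem_coe, Finset.mem_erase,
          mem_nb, mem_inc] at he
        obtain ⟨b, ⟨hbu, hab⟩, hne1, heG, hbe⟩ := he
        have h1 : e ≠ s(a, u) := by
          rintro rfl
          simp at hbe
          rcases hbe with rfl | rfl
          · exact hab.ne rfl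
          · exact hbu rfl
        have h2 : e ≠ s(u, q) := by
          rintro rfl
          simp at hbe
          rcases hbe with rfl | rfl
          · exact hbu rfl
          · have := hb b hab hbu; omega
        simp [Equiv.swap_apply_of_ne_of_ne h1 h2]
      rw [himg]
      simpa using hnb
    have d0 : C s(a, u) ∈ Bad.image C := by
      by_contra h; exact good C hC h
    have d1 : C s(u, q1) ∈ Bad.image C := by
      by_contra h; exact swapgood q1 hq1 hd1 h
    have d2 : C s(u, q2) ∈ Bad.image C := by
      by_contra h; exact swapgood q2 hq2 hd2 h
    have e1 : C s(a, u) ≠ C s(u, q1) := by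
      apply hC _ hau' _ (hHu s(u, q1) hq1 (by simp))
      refine conf_share (v := u) ?_ (by simp) (by simp)
      intro h; rw [Sym2.eq_iff] at h
      have := haq q1 hq1 hd1
      have := hau.ne
      tauto
    have e2 : C s(a, u) ≠ C s(u, q2) := by
      apply hC _ hau' _ (hHu s(u, q2) hq2 (by simp))
      refine conf_share (v := u) ?_ (by simp) (by simp)
      intro h; rw [Sym2.eq_iff] at h
      have := haq q2 hq2 hd2
      have := hau.ne
      tauto
    have e3 : C s(u, q1) ≠ C s(u, q2) := by
      apply hC _ (hHu s(u, q1) hq1 (by simp)) _ (hHu s(u, q2) hq2 (by simp))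
      refine conf_share (v := u) ?_ (by simp) (by simp)
      intro h; rw [Sym2.eq_iff] at h
      have := hq1.ne
      have := hq2.ne
      tauto
    have hsub : ({C s(a, u), C s(u, q1), C s(u, q2)} : Finset _) ⊆ Bad.image C := by
      intro c hc
      simp only [Finset.mem_insert, Finset.mem_singleton] at hc
      rcases hc with rfl | rfl | rfl <;> assumption
    have h1 := Finset.card_le_card hsub
    have h2 := Finset.card_image_le (s := Bad) (f := C)
    rw [Finset.card_insert_of_notMem (by simp [e1, e2]), Finset.card_pair e3] at h1
    omega

/-- Pendant edges at `v`. -/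
noncomputable def pend (G : SimpleGraph V) (v : V) : Finset (Sym2 V) :=
  ((nb G v).filter (fun q => dg G q = 1)).image (fun q => s(v, q))

theorem mem_pend {v : V} {e : Sym2 V} :
    e ∈ pend G v ↔ ∃ q, G.Adj v q ∧ dg G q = 1 ∧ e = s(v, q) := by
  simp only [pend, Finset.mem_image, Finset.mem_filter, mem_nb]
  constructor
  · rintro ⟨q, ⟨h1, h2⟩, h3⟩; exact ⟨q, h1, h2, h3.symm⟩
  · rintro ⟨q, h1, h2, h3⟩; exact ⟨q, ⟨h1, h2⟩, h3.symm⟩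

theorem pend_of_mem {v w : V} {e : Sym2 V} (hw : dg G w = 1) (hvw : G.Adj v w)
    (he : e ∈ G.edgeSet) (hwe : w ∈ e) : e ∈ pend G v := by
  obtain ⟨c, hc, rfl⟩ := edge_at he hwe
  have := deg_one_unique hw hc hvw.symm
  subst this
  exact mem_pend.2 ⟨w, hvw, hw, Sym2.eq_swap⟩

theorem inc_of_pend {v : V} {e : Sym2 V} (h : e ∈ pend G v) : v ∈ e := by
  obtain ⟨q, _, _, rfl⟩ := mem_pend.1 h
  simp

theorem edge_of_pend {v : V} {e : Sym2 V} (h : e ∈ pend G v) : e ∈ G.edgeSet := by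
  obtain ⟨q, h1, _, rfl⟩ := mem_pend.1 h
  exact h1

/-- A vertex incident with two distinct-ended pendant edge descriptions. -/
theorem not_pend {v a b : V} (ha : dg G a ≠ 1) (hb : dg G b ≠ 1) : s(a, b) ∉ pend G v := by
  intro h
  obtain ⟨q, _, h1, h2⟩ := mem_pend.1 h
  rw [Sym2.eq_iff] at h2
  rcases h2 with ⟨rfl, rfl⟩ | ⟨rfl, rfl⟩
  · exact hb h1
  · exact ha h1

/-- The color `x` appears at the vertex `c`. -/
def At (E : Set (Sym2 V)) (C : Sym2 V → Fin K) (c : V) (x : Fin K) : Prop :=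
  ∃ e ∈ E, c ∈ e ∧ C e = x

theorem At.ext {E E' : Set (Sym2 V)} {C C' : Sym2 V → Fin K} {c : V} {x : Fin K}
    (h : At E C c x) (hE : E ⊆ E') (hC : ∀ e ∈ E, C' e = C e) : At E' C' c x := by
  obtain ⟨e, h1, h2, h3⟩ := h
  exact ⟨e, hE h1, h2, by rw [hC e h1, h3]⟩

/-- Fat vertices: all neighbours other than `u`, `w` are pendant. -/
structure Fat (G : SimpleGraph V) (D : ℕ) (v u w : V) : Prop where
  hu : G.Adj v u
  hw : G.Adj v w
  hne : u ≠ w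
  hN : ∀ x, G.Adj v x → x = u ∨ x = w ∨ dg G x = 1
  hp : ∃ q, G.Adj v q ∧ dg G q = 1
  du : dg G u = D
  dw : dg G w = D

theorem Fat.symm {D : ℕ} {v u w : V} (F : Fat G D v u w) : Fat G D v w u where
  hu := F.hw
  hw := F.hu
  hne := F.hne.symm
  hN := fun x hx => by rcases F.hN x hx with h | h | h <;> tauto
  hp := F.hp
  du := F.dw
  dw := F.du

theorem Fat.two_le {D : ℕ} {v u w : V} (F : Fat G D v u w) : 2 ≤ dg G v := by
  have h : ({u, w} : Finset V) ⊆ nb G v := by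
    intro a ha
    simp only [Finset.mem_insert, Finset.mem_singleton] at ha
    rcases ha with rfl | rfl
    · exact mem_nb.2 F.hu
    · exact mem_nb.2 F.hw
  have := Finset.card_le_card h
  rw [Finset.card_pair F.hne] at this
  exact this

theorem Fat.edge {D : ℕ} {v u w : V} (F : Fat G D v u w) {e : Sym2 V} (he : e ∈ G.edgeSet)
    (hv : v ∈ e) (hp : e ∉ pend G v) : e = s(v, u) ∨ e = s(v, w) := by
  obtain ⟨c, hc, rfl⟩ := edge_at he hv
  rcases F.hN c hc with rfl | rfl | h
  · exact Or.inl rfl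
  · exact Or.inr rfl
  · exact absurd (mem_pend.2 ⟨c, hc, h, rfl⟩) hp

theorem Fat.card_pend {D : ℕ} {v u w : V} (M : MinCE G D) (F : Fat G D v u w) :
    (pend G v).card ≤ D - 2 := by
  have hD := M.hD
  have h1 : (pend G v).card ≤ ((nb G v).filter (fun q => dg G q = 1)).card :=
    Finset.card_image_le
  have h2 : (nb G v).filter (fun q => dg G q = 1) ⊆ ((nb G v).erase u).erase w := by
    intro a ha
    simp only [Finset.mem_filter, Finset.mem_erase] at ha ⊢
    refine ⟨?_, ?_, ha.1⟩
    · rintro rfl; have := F.dw; omega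
    · rintro rfl; have := F.du; omega
  have h3 := Finset.card_le_card h2
  rw [Finset.card_erase_of_mem (Finset.mem_erase.2 ⟨F.hne.symm, mem_nb.2 F.hw⟩),
    Finset.card_erase_of_mem (mem_nb.2 F.hu)] at h3
  have h4 := M.hdeg v
  rw [dg] at h4
  omega

/-- Finishing at a fat vertex. -/
theorem Fat.finish {D : ℕ} (M : MinCE G D) {v u w : V} (F : Fat G D v u w)
    {E : Set (Sym2 V)} {C : Sym2 V → Fin (3 * D - 3)} (h : Col G E C) (hE : E ⊆ G.edgeSet)
    (hdis : ∀ e ∈ E, e ∉ pend G v) {x : Fin (3 * D - 3)} (hu : At E C u x) (hw : At E C w x) :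
    ∃ C' : Sym2 V → Fin (3 * D - 3), (∀ e ∈ E, C' e = C e) ∧ Col G (E ∪ pend G v) C' := by
  have hD := M.hD
  set Q1 := ((inc G u).filter (fun e => e ∈ E)).image C with hQ1
  set Q2 := ((inc G w).filter (fun e => e ∈ E)).image C with hQ2
  have hQ : ∀ c y, ∀ e ∈ E, c ∈ e → C e = y → y ∈ ((inc G c).filter (fun e => e ∈ E)).image C := by
    intro c y e he hce hy
    refine Finset.mem_image.2 ⟨e, Finset.mem_filter.2 ⟨mem_inc.2 ⟨hE he, hce⟩, he⟩, hy⟩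
  apply h.extColors (pend G v) (Q1 ∪ Q2)
  · have h1 := F.card_pend M
    have h2 := Finset.card_union_add_card_inter Q1 Q2
    have h3 : 0 < (Q1 ∩ Q2).card := by
      refine Finset.card_pos.2 ⟨x, Finset.mem_inter.2 ⟨?_, ?_⟩⟩
      · obtain ⟨e, a, b, c⟩ := hu; exact hQ u x e a b c
      · obtain ⟨e, a, b, c⟩ := hw; exact hQ w x e a b c
    have h4 : Q1.card ≤ D := Finset.card_image_le.trans ((Finset.card_filter_le _ _).trans
      ((card_inc_le G u).trans (M.hdeg u)))
    have h5 : Q2.card ≤ D := Finset.card_image_le.trans ((Finset.card_filter_le _ _).trans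
      ((card_inc_le G w).trans (M.hdeg w)))
    omega
  · intro e he e' he' hcf
    obtain ⟨q, hq1, hq2, rfl⟩ := mem_pend.1 he
    obtain ⟨c, hc, h1, h2⟩ := conf_pend hq2 hq1 (hE he') hcf
    rcases F.hN c h1 with rfl | rfl | h3
    · exact Finset.mem_union_left _ (hQ _ _ e' he' hc rfl)
    · exact Finset.mem_union_right _ (hQ _ _ e' he' hc rfl)
    · exact absurd (pend_of_mem h3 h1 (hE he') hc) (hdis e' he')

theorem Fat.del {D : ℕ} (M : MinCE G D) {v u w : V} (F : Fat G D v u w) :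
    ∃ C : Sym2 V → Fin (3 * D - 3), Col G (G.edgeSet \ pend G v) C := by
  obtain ⟨q, hq1, hq2⟩ := F.hp
  apply M.deletePend (pend G v) (e := s(v, q)) (mem_pend.2 ⟨q, hq1, hq2, rfl⟩) hq1
  intro e he
  obtain ⟨q, hq1, hq2, rfl⟩ := mem_pend.1 he
  exact ⟨q, by simp, hq2⟩

theorem Fat.not_adj {D : ℕ} (M : MinCE G D) {v u w : V} (F : Fat G D v u w) : ¬ G.Adj u w := by
  intro huw
  have hD := M.hD
  obtain ⟨C, hC⟩ := F.del M
  have h1 : s(u, w) ∈ G.edgeSet \ pend G v := by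
    refine ⟨huw, ?_⟩
    have := F.du
    have := F.dw
    exact not_pend (by omega) (by omega)
  obtain ⟨C', _, h'⟩ := F.finish M hC Set.sdiff_subset (fun e he => he.2)
    (x := C s(u, w)) ⟨_, h1, by simp, rfl⟩ ⟨_, h1, by simp, rfl⟩
  apply M.done h'
  intro e he
  by_cases h : e ∈ pend G v
  · exact Or.inr h
  · exact Or.inl ⟨he, h⟩

/-- Colors at a vertex are distinct. -/
theorem Col.card_image {E : Set (Sym2 V)} {C : Sym2 V → Fin K} (h : Col G E C) {c : V}
    (hc : ∀ e ∈ inc G c, e ∈ E) : ((inc G c).image C).card = dg G c := by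
  rw [Finset.card_image_of_injOn, card_inc]
  intro e he e' he' heq
  by_contra hne
  have h1 := mem_inc.1 he
  have h2 := mem_inc.1 he'
  exact h e (hc e he) e' (hc e' he') (conf_share hne h1.2 h2.2) heq

theorem sym2_ne {a b c d : V} (h1 : a ≠ c) (h2 : a ≠ d) : s(a, b) ≠ s(c, d) := by
  intro h
  rw [Sym2.eq_iff] at h
  tauto

set_option maxHeartbeats 4000000 in
theorem MinCE.lemB {D : ℕ} (M : MinCE G D) {v u w x y q r : V} (F : Fat G D v u w)
    (hux : G.Adj u x) (huy : G.Adj u y) (hvx : v ≠ x) (hvy : v ≠ y) (hxy : x ≠ y)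
    (hN : ∀ z, G.Adj u z → z = v ∨ z = x ∨ z = y ∨ dg G z = 1)
    (hwr : G.Adj w r) (hr : dg G r = 1) (huq : G.Adj u q) (hq : dg G q = 1) (hqx : q ≠ x)
    (hdy : 2 ≤ dg G y) (hdx : dg G x ≤ 2)
    (hor : dg G x = 1 ∨ dg G y < D ∨ ∃ t, G.Adj y t ∧ dg G t = 1) : False := by
  have hD := M.hD
  have hdu := F.du
  have hdw := F.dw
  have hdv := F.two_le
  have huw : ¬ G.Adj u w := F.not_adj M
  have hxw : x ≠ w := by rintro rfl; exact huw hux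
  have hyw : y ≠ w := by rintro rfl; exact huw huy
  have hxu : x ≠ u := hux.ne.symm
  have hyu : y ≠ u := huy.ne.symm
  have hvu : v ≠ u := F.hu.ne
  have hvw : v ≠ w := F.hw.ne
  have hwu : w ≠ u := F.hne.symm
  have hrx : r ≠ x := by
    rintro rfl; exact hwu (deg_one_unique hr hwr.symm hux.symm)
  have one : ∀ {a b : V}, 2 ≤ dg G a → dg G b = 1 → a ≠ b := by
    rintro a b h1 h2 rfl; omega
  have hry : r ≠ y := (one hdy hr).symm
  have hrv : r ≠ v := (one hdv hr).symm
  have hru : r ≠ u := (one (by omega) hr).symm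
  have hqv : q ≠ v := (one hdv hq).symm
  set E1 : Set (Sym2 V) :=
    {e | e ∈ G.edgeSet ∧ e ∉ pend G v ∧ e ≠ s(u, v) ∧ (e ∈ pend G u → e = s(u, x))} with hE1
  have hE1G : E1 ⊆ G.edgeSet := fun e he => he.1
  have mem1 : ∀ e ∈ G.edgeSet, v ∉ e → u ∉ e → e ∈ E1 := by
    intro e he h1 h2
    refine ⟨he, fun h => h1 (inc_of_pend h), ?_, fun h => absurd (inc_of_pend h) h2⟩
    rintro rfl; simp at h1
  have huxE : s(u, x) ∈ E1 := by
    refine ⟨hux, fun h => ?_, fun h => ?_, fun _ => rfl⟩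
    · have := inc_of_pend h
      simp at this; tauto
    · rw [Sym2.eq_iff] at h; grind
  have huyE : s(u, y) ∈ E1 := by
    refine ⟨huy, fun h => ?_, fun h => ?_, fun h => ?_⟩
    · have := inc_of_pend h
      simp at this; tauto
    · rw [Sym2.eq_iff] at h; grind
    · exact absurd h (not_pend (by omega) (by omega))
  have hvwE : s(v, w) ∈ E1 := by
    refine ⟨F.hw, not_pend (by omega) (by omega), fun h => ?_, fun h => ?_⟩
    · rw [Sym2.eq_iff] at h; grind
    · exact absurd h (not_pend (by omega) (by omega))
  have hwE : ∀ e ∈ inc G w, e ∈ E1 := by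
    intro e he
    obtain ⟨h1, h2⟩ := mem_inc.1 he
    obtain ⟨c, hc, rfl⟩ := edge_at h1 h2
    by_cases hcv : c = v
    · subst hcv; rw [Sym2.eq_swap]; exact hvwE
    · apply mem1 _ h1
      · simp; tauto
      · simp
        refine ⟨hwu.symm, ?_⟩
        rintro rfl; exact huw hc.symm
  have hwrE : s(w, r) ∈ E1 := hwE _ (mem_inc.2 ⟨hwr, by simp⟩)
  have atv : ∀ e ∈ E1, v ∈ e → e = s(v, w) := by
    intro e he hv
    rcases F.edge he.1 hv he.2.1 with h | h
    · exact absurd (h.trans Sym2.eq_swap) he.2.2.1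
    · exact h
  have atu : ∀ e ∈ E1, u ∈ e → e = s(u, x) ∨ e = s(u, y) := by
    intro e he hu
    obtain ⟨c, hc, rfl⟩ := edge_at he.1 hu
    rcases hN c hc with rfl | rfl | rfl | h
    · exact absurd rfl he.2.2.1
    · exact Or.inl rfl
    · exact Or.inr rfl
    · exact Or.inl (he.2.2.2 (mem_pend.2 ⟨c, hc, h, rfl⟩))
  have huqE : s(u, q) ∉ E1 := by
    intro h
    rcases atu _ h (by simp) with h | h <;> rw [Sym2.eq_iff] at h
    · grind
    · have := one hdy hq
      grind
  -- filling
  have fill : ∀ (E : Set (Sym2 V)) (C : Sym2 V → Fin (3 * D - 3)), E1 ⊆ E →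
      E ⊆ Insert.insert s(u, q) E1 → Col G E C →
      (∃ c, At E C u c ∧ At E C w c) → False := by
    rintro E C hEE1 hEE2 hC ⟨c, hcu, hcw⟩
    have hEG : E ⊆ G.edgeSet := by
      intro e he
      rcases hEE2 he with rfl | h
      · exact huq
      · exact h.1
    have hEv : ∀ e ∈ E, v ∈ e → e = s(v, w) := by
      intro e he hv
      rcases hEE2 he with rfl | h
      · simp at hv; tauto
      · exact atv e h hv
    obtain ⟨C1, hag1, hC1⟩ := hC.ext1 s(u, v) (inc G x ∪ inc G y ∪ inc G w ∪ {s(u, q)}) (by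
      have h1 := Finset.card_union_le (inc G x ∪ inc G y ∪ inc G w) {s(u, q)}
      have h2 := Finset.card_union_le (inc G x ∪ inc G y) (inc G w)
      have h3 := Finset.card_union_le (inc G x) (inc G y)
      rw [Finset.card_singleton] at h1
      simp only [card_inc] at h1 h2 h3
      have := M.hdeg y
      omega) (by
      intro e' he' hcf
      have heG := hEG he'
      simp only [Finset.mem_union, Finset.mem_singleton, mem_inc]
      obtain ⟨z, hz, ⟨h1, h2⟩ | ⟨h1, h2⟩⟩ := conf_cases heG hcf
      · rcases hN z h1 with rfl | rfl | rfl | h3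
        · exact absurd rfl h2
        · exact Or.inl (Or.inl (Or.inl ⟨heG, hz⟩))
        · exact Or.inl (Or.inl (Or.inr ⟨heG, hz⟩))
        · rcases hEE2 he' with rfl | h
          · exact Or.inr rfl
          · have := h.2.2.2 (pend_of_mem h3 h1 heG hz)
            subst this
            exact Or.inl (Or.inl (Or.inl ⟨heG, by simp⟩))
      · rcases F.hN z h1 with rfl | rfl | h3
        · exact absurd rfl h2
        · exact Or.inl (Or.inr ⟨heG, hz⟩)
        · have h4 := pend_of_mem h3 h1 heG hz
          have := hEv e' he' (inc_of_pend h4)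
          subst this
          exact absurd h4 (not_pend (by omega) (by omega)))
    have hE2v : ∀ e ∈ Insert.insert s(u, v) E, v ∈ e → e = s(v, w) ∨ e = s(u, v) := by
      rintro e (rfl | he) hv
      · tauto
      · exact Or.inl (hEv e he hv)
    have huvp : s(u, v) ∉ pend G v := not_pend (by omega) (by omega)
    have hvwp : s(v, w) ∉ pend G v := not_pend (by omega) (by omega)
    have hpu : ∀ e ∈ pend G u, v ∉ e := by
      intro e he hv
      obtain ⟨z, h1, h2, rfl⟩ := mem_pend.1 he
      simp at hv
      rcases hv with hv | rfl
      · tauto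
      · omega
    obtain ⟨C2, hag2, hC2⟩ := hC1.ext (pend G u) (by
      intro e he
      refine ⟨inc G u ∪ inc G x ∪ inc G y ∪ {s(v, w)}, ?_, ?_⟩
      · have h1 := Finset.card_union_le (inc G u ∪ inc G x ∪ inc G y) {s(v, w)}
        have h2 := Finset.card_union_le (inc G u ∪ inc G x) (inc G y)
        have h3 := Finset.card_union_le (inc G u) (inc G x)
        rw [Finset.card_singleton] at h1
        simp only [card_inc] at h1 h2 h3
        have := M.hdeg y
        omega
      · intro e' he' hcf
        obtain ⟨p, hp1, hp2, rfl⟩ := mem_pend.1 he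
        have heG : e' ∈ G.edgeSet := by
          rcases he' with (rfl | h) | h
          · exact F.hu.symm
          · exact hEG h
          · exact edge_of_pend h
        simp only [Finset.mem_union, Finset.mem_singleton, mem_inc]
        obtain ⟨z, hz, h1, h2⟩ := conf_pend hp2 hp1 heG hcf
        rcases hN z h1 with rfl | rfl | rfl | h3
        · rcases he' with h | h
          · rcases hE2v e' h hz with h | rfl
            · exact Or.inr h
            · left; left; left; exact ⟨heG, by simp⟩
          · exact absurd hz (hpu e' h)
        · exact Or.inl (Or.inl (Or.inr ⟨heG, hz⟩))
        · exact Or.inl (Or.inr ⟨heG, hz⟩)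
        · exact Or.inl (Or.inl (Or.inl ⟨heG, inc_of_pend (pend_of_mem h3 h1 heG hz)⟩)))
    obtain ⟨C3, _, hC3⟩ := F.finish M hC2 (by
        rintro e ((rfl | h) | h)
        · exact F.hu.symm
        · exact hEG h
        · exact edge_of_pend h) (by
        rintro e (h | h) hp
        · rcases hE2v e h (inc_of_pend hp) with rfl | rfl
          · exact hvwp hp
          · exact huvp hp
        · exact hpu e h (inc_of_pend hp))
      (x := c)
      ((hcu.ext (Set.subset_insert _ _) hag1).ext Set.subset_union_left hag2)
      ((hcw.ext (Set.subset_insert _ _) hag1).ext Set.subset_union_left hag2)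
    apply M.done hC3
    intro e he
    by_cases h1 : e ∈ pend G v
    · exact Or.inr h1
    by_cases h2 : e ∈ pend G u
    · exact Or.inl (Or.inr h2)
    by_cases h3 : e = s(u, v)
    · exact Or.inl (Or.inl (Or.inl h3))
    · exact Or.inl (Or.inl (Or.inr (hEE1 ⟨he, h1, h3, fun h => absurd h h2⟩)))
  obtain ⟨C, hC0⟩ := F.del M
  have hC : Col G E1 C := hC0.mono (fun e he => ⟨he.1, he.2.1⟩)
  by_cases hcom : ∃ c, At E1 C u c ∧ At E1 C w c
  · exact fill E1 C (le_refl _) (Set.subset_insert _ _) hC hcom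
  have hdis : ∀ e ∈ E1, u ∈ e → ∀ σ, At E1 C w σ → C e ≠ σ := by
    rintro e he hu σ hσ rfl
    exact hcom ⟨_, ⟨e, he, hu, rfl⟩, hσ⟩
  -- moving the color of `v w`
  have avoid : ∀ σ, At E1 C w σ → ∃ C1 : Sym2 V → Fin (3 * D - 3), Col G E1 C1 ∧
      C1 s(v, w) ≠ σ ∧ At E1 C1 w σ ∧ ∀ e, e ≠ s(v, w) → e ≠ s(w, r) → C1 e = C e := by
    intro σ hσ
    by_cases h : C s(v, w) = σ
    · refine ⟨C ∘ Equiv.swap s(v, w) s(w, r), ?_, ?_, ?_, ?_⟩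
      · apply hC.swap hE1G hr hvwE hwrE hrv.symm
        intro z hz hzw e he hze hne
        rcases F.hN z hz with rfl | rfl | h3
        · exact hdis e he hze _ ⟨_, hwrE, by simp, rfl⟩
        · exact absurd rfl hzw
        · exact absurd (pend_of_mem h3 hz he.1 hze) he.2.1
      · simp
        rw [← h]
        apply hC _ hwrE _ hvwE
        apply conf_share (v := w) _ (by simp) (by simp)
        intro hh; rw [Sym2.eq_iff] at hh; grind
      · exact ⟨s(w, r), hwrE, by simp, by simpa using h⟩
      · intro e h1 h2
        simp [Equiv.swap_apply_of_ne_of_ne h1 h2]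
    · exact ⟨C, hC, h, hσ, fun _ _ _ => rfl⟩
  set Ty := ((inc G y).erase s(u, y)).image C with hTy
  set Tx := ((inc G x).erase s(u, x)).image C with hTx
  have hTyc : Ty.card ≤ dg G y - 1 := by
    refine Finset.card_image_le.trans ?_
    rw [Finset.card_erase_of_mem (mem_inc.2 ⟨huy, by simp⟩), card_inc]
  have hTxc : Tx.card ≤ dg G x - 1 := by
    refine Finset.card_image_le.trans ?_
    rw [Finset.card_erase_of_mem (mem_inc.2 ⟨hux, by simp⟩), card_inc]
  have hTxm : ∀ e ∈ E1, x ∈ e → e ≠ s(u, x) → C e ∈ Tx := by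
    intro e he hx hne
    exact Finset.mem_image_of_mem _ (Finset.mem_erase.2 ⟨hne, mem_inc.2 ⟨he.1, hx⟩⟩)
  have hTym : ∀ e ∈ E1, y ∈ e → e ≠ s(u, y) → C e ∈ Ty := by
    intro e he hx hne
    exact Finset.mem_image_of_mem _ (Finset.mem_erase.2 ⟨hne, mem_inc.2 ⟨he.1, hx⟩⟩)
  set S := (inc G w).image C with hS
  have hSc : S.card = D := by rw [hS, hC.card_image hwE, hdw]
  have hSA : ∀ σ ∈ S, At E1 C w σ := by
    intro σ hσ
    obtain ⟨e, he, rfl⟩ := Finset.mem_image.1 hσ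
    exact ⟨e, hwE e he, (mem_inc.1 he).2, rfl⟩
  have same : ∀ C1 : Sym2 V → Fin (3 * D - 3),
      (∀ e, e ≠ s(v, w) → e ≠ s(w, r) → C1 e = C e) →
      ∀ e, (x ∈ e ∨ y ∈ e) → C1 e = C e := by
    intro C1 h e hz
    apply h
    · rintro rfl
      simp at hz; grind
    · rintro rfl
      simp at hz; grind
  by_cases hsub : S ⊆ Ty ∪ Tx
  · have h1 := Finset.card_le_card hsub
    have h2 := Finset.card_union_add_card_inter Ty Tx
    have hDy := M.hdeg y
    have h3 : (Ty ∩ Tx).card = 0 := by omega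
    have h4 : S = Ty ∪ Tx := Finset.eq_of_subset_of_card_le hsub (by omega)
    rcases hor with h | h | ⟨t, hyt, ht⟩
    · omega
    · omega
    have hty : t ≠ u := (one (by omega) ht).symm
    have htv : t ≠ v := (one hdv ht).symm
    have htw : t ≠ w := (one (by omega) ht).symm
    have hytE : s(y, t) ∈ E1 := by
      apply mem1 _ hyt
      · simp; tauto
      · simp; tauto
    have hytne : s(y, t) ≠ s(u, y) := by
      intro hh; rw [Sym2.eq_iff] at hh; grind
    have hτy : C s(y, t) ∈ Ty := hTym _ hytE (by simp) hytne
    have hτx : C s(y, t) ∉ Tx := by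
      intro h
      have : C s(y, t) ∈ Ty ∩ Tx := Finset.mem_inter.2 ⟨hτy, h⟩
      rw [Finset.card_eq_zero] at h3
      rw [h3] at this
      simp at this
    have hτA : At E1 C w (C s(y, t)) := hSA _ (by rw [h4]; exact Finset.mem_union_left _ hτy)
    obtain ⟨C1, hC1, hne1, hA1, hag⟩ := avoid _ hτA
    have hsame := same C1 hag
    have hC1yt : C1 s(y, t) = C s(y, t) := hsame _ (by simp)
    have hC2 := hC1.swap hE1G ht huyE hytE hty.symm (by
      intro z hz hzy e he hze hne
      rw [hC1yt]
      have hux' : C1 s(u, x) ≠ C s(y, t) := by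
        rw [hsame _ (by simp)]
        exact hdis _ huxE (by simp) _ hτA
      rcases hN z hz with rfl | rfl | rfl | h5
      · rw [atv e he hze]; exact hne1
      · by_cases h6 : e = s(u, z)
        · rw [h6]; exact hux'
        · rw [hsame e (Or.inl hze)]
          intro h7
          exact hτx (h7 ▸ hTxm e he hze h6)
      · exact absurd rfl hzy
      · rw [he.2.2.2 (pend_of_mem h5 hz he.1 hze)]
        exact hux')
    apply fill E1 _ (le_refl _) (Set.subset_insert _ _) hC2
    refine ⟨C s(y, t), ⟨s(u, y), huyE, by simp, by simpa using hC1yt⟩, ?_⟩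
    obtain ⟨e2, he2, hw2, hc2⟩ := hA1
    refine ⟨e2, he2, hw2, ?_⟩
    rw [Function.comp, Equiv.swap_apply_of_ne_of_ne, hc2]
    · rintro rfl; simp at hw2; grind
    · rintro rfl; simp at hw2; grind
  · obtain ⟨σ, hσS, hσX⟩ := Finset.not_subset.1 hsub
    rw [Finset.mem_union, not_or] at hσX
    obtain ⟨C1, hC1, hne1, hA1, hag⟩ := avoid σ (hSA σ hσS)
    have hsame := same C1 hag
    have hatu : ∀ e ∈ E1, u ∈ e → C1 e ≠ σ := by
      intro e he hu
      rw [hsame]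
      · exact hdis e he hu σ (hSA σ hσS)
      · rcases atu e he hu with rfl | rfl <;> simp
    have hC2 := hC1.update (c := σ) huqE (by
      intro e' he' hcf
      by_cases hu : u ∈ e'
      · exact hatu e' he' hu
      obtain ⟨z, hz, h1, h2⟩ := conf_pend hq huq he'.1 hcf
      rcases hN z h1 with rfl | rfl | rfl | h3
      · rw [atv e' he' hz]; exact hne1
      · rw [hsame _ (Or.inl hz)]
        intro h
        apply hσX.2
        rw [← h]
        apply hTxm e' he' hz
        rintro rfl; simp at hu
      · rw [hsame _ (Or.inr hz)]
        intro h
        apply hσX.1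
        rw [← h]
        apply hTym e' he' hz
        rintro rfl; simp at hu
      · exact absurd (inc_of_pend (pend_of_mem h3 h1 he'.1 hz)) hu)
    refine fill _ _ (Set.subset_insert _ _) (le_refl _) hC2 ⟨σ, ?_, ?_⟩
    · exact ⟨s(u, q), Or.inl rfl, by simp, by simp⟩
    · refine hA1.ext (Set.subset_insert _ _) ?_
      intro e he
      apply Function.update_of_ne
      rintro rfl; exact huqE he

/-- Recoloring the edge `ab` by swapping with one of two pendant edges at `b`. -/
theorem Col.adjust {E : Set (Sym2 V)} {C : Sym2 V → Fin K} {a b r1 r2 : V} (h : Col G E C)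
    (hE : E ⊆ G.edgeSet) (ha : 2 ≤ dg G a) (hb : 2 ≤ dg G b) (hr : r1 ≠ r2)
    (h1 : dg G r1 = 1) (h2 : dg G r2 = 1)
    (hab : s(a, b) ∈ E) (hb1 : s(b, r1) ∈ E) (hb2 : s(b, r2) ∈ E) {g σ τ : Fin K}
    (hg : At E C b g → g = σ ∨ g = τ)
    (hfar : ∀ w, G.Adj a w → w ≠ b → ∀ e ∈ E, w ∈ e → e ≠ s(a, b) → C e = g) :
    ∃ C1 : Sym2 V → Fin K, Col G E C1 ∧ (C1 s(a, b) ≠ g ∧ C1 s(a, b) ≠ σ ∧ C1 s(a, b) ≠ τ) ∧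
      (∀ c, c ≠ a → dg G c ≠ 1 → ∀ x, At E C1 c x ↔ At E C c x) ∧
      (∀ e, C1 e ≠ C e → b ∈ e ∧ (e = s(a, b) ∨ ∃ r ∈ e, dg G r = 1)) := by
  have har1 : a ≠ r1 := by rintro rfl; omega
  have har2 : a ≠ r2 := by rintro rfl; omega
  have hbr1 : b ≠ r1 := by rintro rfl; omega
  have hbr2 : b ≠ r2 := by rintro rfl; omega
  have hAb : a ≠ b := (show G.Adj a b from hE hab).ne
  have key : ∀ r, dg G r = 1 → a ≠ r → s(b, r) ∈ E →
      (C s(b, r) ≠ g ∧ C s(b, r) ≠ σ ∧ C s(b, r) ≠ τ) →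
      ∃ C1 : Sym2 V → Fin K, Col G E C1 ∧ (C1 s(a, b) ≠ g ∧ C1 s(a, b) ≠ σ ∧ C1 s(a, b) ≠ τ) ∧
      (∀ c, c ≠ a → dg G c ≠ 1 → ∀ x, At E C1 c x ↔ At E C c x) ∧
      (∀ e, C1 e ≠ C e → b ∈ e ∧ (e = s(a, b) ∨ ∃ r ∈ e, dg G r = 1)) := by
    intro r hr har hbr hc
    have hsw : ∀ c, c ≠ a → dg G c ≠ 1 → ∀ e ∈ E, c ∈ e →
        Equiv.swap s(a, b) s(b, r) e ∈ E ∧ c ∈ Equiv.swap s(a, b) s(b, r) e := by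
      intro c hca hc1 e he hce
      have hcr : c ≠ r := by rintro rfl; exact hc1 hr
      by_cases e1 : e = s(a, b)
      · subst e1
        rw [Equiv.swap_apply_left]
        refine ⟨hbr, ?_⟩
        simp at hce ⊢; tauto
      by_cases e2 : e = s(b, r)
      · subst e2
        rw [Equiv.swap_apply_right]
        refine ⟨hab, ?_⟩
        simp at hce ⊢; tauto
      rw [Equiv.swap_apply_of_ne_of_ne e1 e2]
      exact ⟨he, hce⟩
    refine ⟨C ∘ Equiv.swap s(a, b) s(b, r), ?_, ?_, ?_, ?_⟩
    · apply h.swap hE hr hab hbr har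
      intro w hw hwb e he hwe hne
      rw [hfar w hw hwb e he hwe hne]
      exact hc.1.symm
    · simpa using hc
    · intro c hca hc1 x
      constructor
      · rintro ⟨e, he, hce, hx⟩
        obtain ⟨h3, h4⟩ := hsw c hca hc1 e he hce
        exact ⟨_, h3, h4, hx⟩
      · rintro ⟨e, he, hce, hx⟩
        obtain ⟨h3, h4⟩ := hsw c hca hc1 e he hce
        exact ⟨_, h3, h4, by simpa using hx⟩
    · intro e hne
      by_cases e1 : e = s(a, b)
      · subst e1
        exact ⟨by simp, Or.inl rfl⟩
      by_cases e2 : e = s(b, r)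
      · subst e2
        exact ⟨by simp, Or.inr ⟨r, by simp, hr⟩⟩
      · exfalso
        apply hne
        simp [Equiv.swap_apply_of_ne_of_ne e1 e2]
  have d1 : C s(a, b) ≠ C s(b, r1) := by
    apply h _ hab _ hb1 (conf_share (v := b) _ (by simp) (by simp))
    intro hh; rw [Sym2.eq_iff] at hh; grind
  have d2 : C s(a, b) ≠ C s(b, r2) := by
    apply h _ hab _ hb2 (conf_share (v := b) _ (by simp) (by simp))
    intro hh; rw [Sym2.eq_iff] at hh; grind
  have d3 : C s(b, r1) ≠ C s(b, r2) := by
    apply h _ hb1 _ hb2 (conf_share (v := b) _ (by simp) (by simp))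
    intro hh; rw [Sym2.eq_iff] at hh; grind
  have g0 : C s(a, b) = g → g = σ ∨ g = τ := fun h => hg ⟨_, hab, by simp, h⟩
  have g1 : C s(b, r1) = g → g = σ ∨ g = τ := fun h => hg ⟨_, hb1, by simp, h⟩
  have g2 : C s(b, r2) = g → g = σ ∨ g = τ := fun h => hg ⟨_, hb2, by simp, h⟩
  by_cases c0 : C s(a, b) ≠ g ∧ C s(a, b) ≠ σ ∧ C s(a, b) ≠ τ
  · exact ⟨C, h, c0, fun _ _ _ _ => Iff.rfl, fun e he => absurd rfl he⟩
  by_cases c1 : C s(b, r1) ≠ g ∧ C s(b, r1) ≠ σ ∧ C s(b, r1) ≠ τ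
  · exact key r1 h1 har1 hb1 c1
  by_cases c2 : C s(b, r2) ≠ g ∧ C s(b, r2) ≠ σ ∧ C s(b, r2) ≠ τ
  · exact key r2 h2 har2 hb2 c2
  exfalso
  have f0 : C s(a, b) = σ ∨ C s(a, b) = τ := by
    by_contra hc
    push Not at hc
    refine c0 ⟨fun hh => ?_, hc⟩
    rcases g0 hh with h | h
    · exact hc.1 (hh.trans h)
    · exact hc.2 (hh.trans h)
  have f1 : C s(b, r1) = σ ∨ C s(b, r1) = τ := by
    by_contra hc
    push Not at hc
    refine c1 ⟨fun hh => ?_, hc⟩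
    rcases g1 hh with h | h
    · exact hc.1 (hh.trans h)
    · exact hc.2 (hh.trans h)
  have f2 : C s(b, r2) = σ ∨ C s(b, r2) = τ := by
    by_contra hc
    push Not at hc
    refine c2 ⟨fun hh => ?_, hc⟩
    rcases g2 hh with h | h
    · exact hc.1 (hh.trans h)
    · exact hc.2 (hh.trans h)
  rcases f0 with a0 | a0 <;> rcases f1 with a1 | a1 <;> rcases f2 with a2 | a2
  · exact d1 (a0.trans a1.symm)
  · exact d1 (a0.trans a1.symm)
  · exact d2 (a0.trans a2.symm)
  · exact d3 (a1.trans a2.symm)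
  · exact d3 (a1.trans a2.symm)
  · exact d2 (a0.trans a2.symm)
  · exact d1 (a0.trans a1.symm)
  · exact d1 (a0.trans a1.symm)

set_option maxHeartbeats 4000000 in
theorem MinCE.lemC {D : ℕ} (M : MinCE G D) {v u w x z y q1 q2 r1 r2 t1 t2 : V}
    (F : Fat G D v u w) (F' : Fat G D x u z) (huy : G.Adj u y)
    (hvx : v ≠ x) (hvy : v ≠ y) (hxy : x ≠ y)
    (hN : ∀ c, G.Adj u c → c = v ∨ c = x ∨ c = y ∨ dg G c = 1)
    (hq12 : q1 ≠ q2) (huq1 : G.Adj u q1) (huq2 : G.Adj u q2) (hq1 : dg G q1 = 1)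
    (hq2 : dg G q2 = 1)
    (hr12 : r1 ≠ r2) (hwr1 : G.Adj w r1) (hwr2 : G.Adj w r2) (hr1 : dg G r1 = 1)
    (hr2 : dg G r2 = 1)
    (ht12 : t1 ≠ t2) (hzt1 : G.Adj z t1) (hzt2 : G.Adj z t2) (ht1 : dg G t1 = 1)
    (ht2 : dg G t2 = 1) (hdy : 2 ≤ dg G y) : False := by
  have hD := M.hD
  have hdu := F.du
  have hdw := F.dw
  have hdz := F'.dw
  have hdv := F.two_le
  have hdx := F'.two_le
  have huw : ¬ G.Adj u w := F.not_adj M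
  have huz : ¬ G.Adj u z := F'.not_adj M
  have hux : G.Adj u x := F'.hu.symm
  have huv : G.Adj u v := F.hu.symm
  have hxw : x ≠ w := by rintro rfl; exact huw hux
  have hyw : y ≠ w := by rintro rfl; exact huw huy
  have hvz : v ≠ z := by rintro rfl; exact huz huv
  have hyz : y ≠ z := by rintro rfl; exact huz huy
  have hxu : x ≠ u := hux.ne.symm
  have hyu : y ≠ u := huy.ne.symm
  have hvu : v ≠ u := F.hu.ne
  have hvw : v ≠ w := F.hw.ne
  have hxz : x ≠ z := F'.hw.ne
  have hwu : w ≠ u := F.hne.symm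
  have hzu : z ≠ u := F'.hne.symm
  have one : ∀ {a b : V}, 2 ≤ dg G a → dg G b = 1 → a ≠ b := by
    rintro a b h1 h2 rfl; omega
  set E1 : Set (Sym2 V) :=
    {e | e ∈ G.edgeSet ∧ e ∉ pend G v ∧ e ∉ pend G x ∧ e ∉ pend G u ∧ e ≠ s(u, v) ∧
      e ≠ s(u, x)} with hE1
  have hE1G : E1 ⊆ G.edgeSet := fun e he => he.1
  have mem1 : ∀ e ∈ G.edgeSet, v ∉ e → x ∉ e → u ∉ e → e ∈ E1 := by
    intro e he h1 h2 h3
    refine ⟨he, fun h => h1 (inc_of_pend h), fun h => h2 (inc_of_pend h),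
      fun h => h3 (inc_of_pend h), ?_, ?_⟩
    · rintro rfl; simp at h1
    · rintro rfl; simp at h2
  have memE : ∀ a b, G.Adj a b → 2 ≤ dg G a → 2 ≤ dg G b → s(a, b) ≠ s(u, v) →
      s(a, b) ≠ s(u, x) → s(a, b) ∈ E1 := by
    intro a b h1 h2 h3 h4 h5
    exact ⟨h1, not_pend (by omega) (by omega), not_pend (by omega) (by omega),
      not_pend (by omega) (by omega), h4, h5⟩
  have huyE : s(u, y) ∈ E1 := by
    apply memE _ _ huy (by omega) hdy <;>
    · intro hh; rw [Sym2.eq_iff] at hh; grind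
  have hvwE : s(v, w) ∈ E1 := by
    apply memE _ _ F.hw (by omega) (by omega) <;>
    · intro hh; rw [Sym2.eq_iff] at hh; grind
  have hxzE : s(x, z) ∈ E1 := by
    apply memE _ _ F'.hw (by omega) (by omega) <;>
    · intro hh; rw [Sym2.eq_iff] at hh; grind
  have farE : ∀ c, c ≠ u → c ≠ v → c ≠ x → dg G c = D → ¬ G.Adj u c →
      ∀ e ∈ inc G c, e ∈ E1 := by
    intro c hcu hcv hcx hdc huc e he
    obtain ⟨h1, h2⟩ := mem_inc.1 he
    obtain ⟨d, hd, rfl⟩ := edge_at h1 h2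
    have hdu : d ≠ u := by rintro rfl; exact huc hd.symm
    have hud : u ∉ s(c, d) := by simp; exact ⟨hcu.symm, hdu.symm⟩
    by_cases hd1 : dg G d = 1
    · apply mem1 _ h1 _ _ hud
      · simp; exact ⟨hcv.symm, one hdv hd1⟩
      · simp; exact ⟨hcx.symm, one hdx hd1⟩
    · have hd0 : 0 < dg G d := Finset.card_pos.2 ⟨c, mem_nb.2 hd.symm⟩
      apply memE _ _ hd (by omega) (by omega)
      · intro hh; rw [hh] at hud; simp at hud
      · intro hh; rw [hh] at hud; simp at hud
  have hwE := farE w hwu hvw.symm hxw.symm hdw huw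
  have hzE := farE z hzu hvz.symm hxz.symm hdz huz
  have atv : ∀ e ∈ E1, v ∈ e → e = s(v, w) := by
    intro e he hv
    rcases F.edge he.1 hv he.2.1 with h | h
    · exact absurd (h.trans Sym2.eq_swap) he.2.2.2.2.1
    · exact h
  have atx : ∀ e ∈ E1, x ∈ e → e = s(x, z) := by
    intro e he hv
    rcases F'.edge he.1 hv he.2.2.1 with h | h
    · exact absurd (h.trans Sym2.eq_swap) he.2.2.2.2.2
    · exact h
  have atu : ∀ e ∈ E1, u ∈ e → e = s(u, y) := by
    intro e he hu
    obtain ⟨c, hc, rfl⟩ := edge_at he.1 hu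
    rcases hN c hc with rfl | rfl | rfl | h
    · exact absurd rfl he.2.2.2.2.1
    · exact absurd rfl he.2.2.2.2.2
    · rfl
    · exact absurd (mem_pend.2 ⟨c, hc, h, rfl⟩) he.2.2.2.1
  have huqE : ∀ q, dg G q = 1 → s(u, q) ∉ E1 := by
    intro q hq h
    have h := atu _ h (by simp)
    have := one hdy hq
    rw [Sym2.eq_iff] at h
    grind
  -- filling
  have fill : ∀ (E : Set (Sym2 V)) (C : Sym2 V → Fin (3 * D - 3)), E1 ⊆ E →
      E ⊆ Insert.insert s(u, q2) (Insert.insert s(u, q1) E1) → Col G E C →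
      (∃ c, At E C u c ∧ At E C w c) → (∃ c, At E C u c ∧ At E C z c) → False := by
    rintro E C hEE1 hEE2 hC ⟨c, hcu, hcw⟩ ⟨d, hdu', hdz'⟩
    have hEG : E ⊆ G.edgeSet := by
      intro e he
      rcases hEE2 he with rfl | rfl | h
      · exact huq2
      · exact huq1
      · exact h.1
    have hqv1 := one hdv hq1
    have hqv2 := one hdv hq2
    have hqx1 := one hdx hq1
    have hqx2 := one hdx hq2
    have hEv : ∀ e ∈ E, v ∈ e → e = s(v, w) := by
      intro e he hv
      rcases hEE2 he with rfl | rfl | h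
      · simp at hv; exact absurd hv (not_or.2 ⟨hvu, hqv2⟩)
      · simp at hv; exact absurd hv (not_or.2 ⟨hvu, hqv1⟩)
      · exact atv e h hv
    have hEx : ∀ e ∈ E, x ∈ e → e = s(x, z) := by
      intro e he hv
      rcases hEE2 he with rfl | rfl | h
      · simp at hv; exact absurd hv (not_or.2 ⟨hxu, hqx2⟩)
      · simp at hv; exact absurd hv (not_or.2 ⟨hxu, hqx1⟩)
      · exact atx e h hv
    have hEu : ∀ e ∈ E, e ∈ pend G u → e = s(u, q1) ∨ e = s(u, q2) := by
      intro e he hv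
      rcases hEE2 he with rfl | rfl | h
      · exact Or.inr rfl
      · exact Or.inl rfl
      · exact absurd hv h.2.2.2.1
    have hvwp : s(v, w) ∉ pend G v := not_pend (by omega) (by omega)
    have hxzp : s(x, z) ∉ pend G x := not_pend (by omega) (by omega)
    have huvp : s(u, v) ∉ pend G v := not_pend (by omega) (by omega)
    have huxp : s(u, x) ∉ pend G x := not_pend (by omega) (by omega)
    have hpu : ∀ e ∈ pend G u, v ∉ e ∧ x ∉ e := by
      intro e he
      obtain ⟨c, h1, h2, rfl⟩ := mem_pend.1 he
      have := one hdv h2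
      have := one hdx h2
      simp
      exact ⟨⟨hvu, by assumption⟩, hxu, by assumption⟩
    obtain ⟨C1, hag1, hC1⟩ := hC.ext1 s(u, x)
      (inc G y ∪ inc G z ∪ {s(v, w), s(u, q1), s(u, q2)}) (by
      have h1 := Finset.card_union_le (inc G y ∪ inc G z) {s(v, w), s(u, q1), s(u, q2)}
      have h2 := Finset.card_union_le (inc G y) (inc G z)
      have h3 : ({s(v, w), s(u, q1), s(u, q2)} : Finset (Sym2 V)).card ≤ 3 :=
        Finset.card_le_three
      simp only [card_inc] at h1 h2 h3
      have := M.hdeg y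
      omega) (by
      intro e' he' hcf
      have heG := hEG he'
      simp only [Finset.mem_union, Finset.mem_insert, Finset.mem_singleton, mem_inc]
      obtain ⟨c, hz, ⟨h1, h2⟩ | ⟨h1, h2⟩⟩ := conf_cases heG hcf
      · rcases hN c h1 with rfl | rfl | rfl | h3
        · exact Or.inr (Or.inl (hEv e' he' hz))
        · exact absurd rfl h2
        · exact Or.inl (Or.inl ⟨heG, hz⟩)
        · exact Or.inr (Or.inr (hEu e' he' (pend_of_mem h3 h1 heG hz)))
      · rcases F'.hN c h1 with rfl | rfl | h3
        · exact absurd rfl h2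
        · exact Or.inl (Or.inr ⟨heG, hz⟩)
        · have h4 := pend_of_mem h3 h1 heG hz
          have := hEx e' he' (inc_of_pend h4)
          subst this
          exact absurd h4 hxzp)
    have hE2G : Insert.insert s(u, x) E ⊆ G.edgeSet := by
      rintro e (rfl | h)
      · exact hux
      · exact hEG h
    have hE2v : ∀ e ∈ Insert.insert s(u, x) E, v ∈ e → e = s(v, w) := by
      rintro e (rfl | he) hv
      · simp at hv; exact absurd hv (not_or.2 ⟨hvu, hvx⟩)
      · exact hEv e he hv
    have hE2x : ∀ e ∈ Insert.insert s(u, x) E, x ∈ e → e = s(x, z) ∨ e = s(u, x) := by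
      rintro e (rfl | he) hv
      · exact Or.inr rfl
      · exact Or.inl (hEx e he hv)
    have hE2u : ∀ e ∈ Insert.insert s(u, x) E, e ∈ pend G u → e = s(u, q1) ∨ e = s(u, q2) := by
      rintro e (rfl | he) hv
      · exact absurd hv (not_pend (by omega) (by omega))
      · exact hEu e he hv
    obtain ⟨C2, hag2, hC2⟩ := hC1.ext1 s(u, v)
      (inc G y ∪ inc G w ∪ {s(x, z), s(u, x), s(u, q1), s(u, q2)}) (by
      have h1 := Finset.card_union_le (inc G y ∪ inc G w) {s(x, z), s(u, x), s(u, q1), s(u, q2)}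
      have h2 := Finset.card_union_le (inc G y) (inc G w)
      have h3 : ({s(x, z), s(u, x), s(u, q1), s(u, q2)} : Finset (Sym2 V)).card ≤ 4 :=
        Finset.card_le_four
      simp only [card_inc] at h1 h2 h3
      have := M.hdeg y
      omega) (by
      intro e' he' hcf
      have heG := hE2G he'
      simp only [Finset.mem_union, Finset.mem_insert, Finset.mem_singleton, mem_inc]
      obtain ⟨c, hz, ⟨h1, h2⟩ | ⟨h1, h2⟩⟩ := conf_cases heG hcf
      · rcases hN c h1 with rfl | rfl | rfl | h3
        · exact absurd rfl h2
        · right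
          rcases hE2x e' he' hz with h | h
          · exact Or.inl h
          · exact Or.inr (Or.inl h)
        · exact Or.inl (Or.inl ⟨heG, hz⟩)
        · exact Or.inr (Or.inr (Or.inr (hE2u e' he' (pend_of_mem h3 h1 heG hz))))
      · rcases F.hN c h1 with rfl | rfl | h3
        · exact absurd rfl h2
        · exact Or.inl (Or.inr ⟨heG, hz⟩)
        · have h4 := pend_of_mem h3 h1 heG hz
          have := hE2v e' he' (inc_of_pend h4)
          subst this
          exact absurd h4 hvwp)
    set E3 := Insert.insert s(u, v) (Insert.insert s(u, x) E) with hE3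
    have hE3G : E3 ⊆ G.edgeSet := by
      rintro e (rfl | h)
      · exact huv
      · exact hE2G h
    have hE3v : ∀ e ∈ E3, v ∈ e → e = s(v, w) ∨ e = s(u, v) := by
      rintro e (rfl | he) hv
      · exact Or.inr rfl
      · exact Or.inl (hE2v e he hv)
    have hE3x : ∀ e ∈ E3, x ∈ e → e = s(x, z) ∨ e = s(u, x) := by
      rintro e (rfl | he) hv
      · simp at hv; exact absurd hv (not_or.2 ⟨hxu, hvx.symm⟩)
      · exact hE2x e he hv
    obtain ⟨C3, hag3, hC3⟩ := hC2.ext (pend G u) (by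
      intro e he
      refine ⟨inc G u ∪ inc G y ∪ {s(v, w), s(x, z)}, ?_, ?_⟩
      · have h1 := Finset.card_union_le (inc G u ∪ inc G y) {s(v, w), s(x, z)}
        have h3 := Finset.card_union_le (inc G u) (inc G y)
        have h4 : ({s(v, w), s(x, z)} : Finset (Sym2 V)).card ≤ 2 := Finset.card_le_two
        simp only [card_inc] at h1 h3
        have := M.hdeg y
        omega
      · intro e' he' hcf
        obtain ⟨p, hp1, hp2, rfl⟩ := mem_pend.1 he
        have heG : e' ∈ G.edgeSet := by
          rcases he' with h | h
          · exact hE3G h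
          · exact edge_of_pend h
        simp only [Finset.mem_union, Finset.mem_insert, Finset.mem_singleton, mem_inc]
        obtain ⟨c, hz, h1, h2⟩ := conf_pend hp2 hp1 heG hcf
        rcases hN c h1 with rfl | rfl | rfl | h3
        · rcases he' with h | h
          · rcases hE3v e' h hz with h | rfl
            · exact Or.inr (Or.inl h)
            · exact Or.inl (Or.inl ⟨heG, by simp⟩)
          · exact absurd hz (hpu e' h).1
        · rcases he' with h | h
          · rcases hE3x e' h hz with h | rfl
            · exact Or.inr (Or.inr h)
            · exact Or.inl (Or.inl ⟨heG, by simp⟩)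
          · exact absurd hz (hpu e' h).2
        · exact Or.inl (Or.inr ⟨heG, hz⟩)
        · exact Or.inl (Or.inl ⟨heG, inc_of_pend (pend_of_mem h3 h1 heG hz)⟩))
    have hup : ∀ {c : V} {a : Fin (3 * D - 3)}, At E C c a → At (E3 ∪ pend G u) C3 c a := by
      intro c a h
      exact ((h.ext (Set.subset_insert _ _) hag1).ext (Set.subset_insert _ _) hag2).ext
        Set.subset_union_left hag3
    have hE4G : E3 ∪ pend G u ⊆ G.edgeSet := by
      rintro e (h | h)
      · exact hE3G h
      · exact edge_of_pend h
    obtain ⟨C4, hag4, hC4⟩ := F.finish M hC3 hE4G (by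
        rintro e (h | h) hp
        · rcases hE3v e h (inc_of_pend hp) with rfl | rfl
          · exact hvwp hp
          · exact huvp hp
        · exact (hpu e h).1 (inc_of_pend hp))
      (x := c) (hup hcu) (hup hcw)
    obtain ⟨C5, hag5, hC5⟩ := F'.finish M hC4 (by
        rintro e (h | h)
        · exact hE4G h
        · exact edge_of_pend h) (by
        rintro e ((h | h) | h) hp
        · rcases hE3x e h (inc_of_pend hp) with rfl | rfl
          · exact hxzp hp
          · exact huxp hp
        · exact (hpu e h).2 (inc_of_pend hp)
        · have h5 := (Sym2.mem_and_mem_iff hvx).1 ⟨inc_of_pend h, inc_of_pend hp⟩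
          subst h5
          exact not_pend (by omega) (by omega) hp)
      (x := d) ((hup hdu').ext Set.subset_union_left hag4)
      ((hup hdz').ext Set.subset_union_left hag4)
    apply M.done hC5
    intro e he
    by_cases h0 : e ∈ pend G x
    · exact Or.inr h0
    by_cases h1 : e ∈ pend G v
    · exact Or.inl (Or.inr h1)
    by_cases h2 : e ∈ pend G u
    · exact Or.inl (Or.inl (Or.inr h2))
    refine Or.inl (Or.inl (Or.inl ?_))
    by_cases h3 : e = s(u, v)
    · exact Or.inl h3
    by_cases h4 : e = s(u, x)
    · exact Or.inr (Or.inl h4)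
    · exact Or.inr (Or.inr (hEE1 ⟨he, h1, h0, h2, h3, h4⟩))
  obtain ⟨C, hC0⟩ := F.del M
  have hC : Col G E1 C := hC0.mono (fun e he => ⟨he.1, he.2.1⟩)
  set T := ((inc G y).erase s(u, y)).image C with hT
  have hTc : T.card ≤ D - 1 := by
    refine Finset.card_image_le.trans ?_
    rw [Finset.card_erase_of_mem (mem_inc.2 ⟨huy, by simp⟩), card_inc]
    have := M.hdeg y
    omega
  have hTm : ∀ e ∈ E1, y ∈ e → e ≠ s(u, y) → C e ∈ T := by
    intro e he hx hne
    exact Finset.mem_image_of_mem _ (Finset.mem_erase.2 ⟨hne, mem_inc.2 ⟨he.1, hx⟩⟩)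
  -- choice of the target colors
  have choose : ∀ c, dg G c = D → (∀ e ∈ inc G c, e ∈ E1) →
      ∃ σ, At E1 C c σ ∧ (σ = C s(u, y) ∨ σ ∉ T) ∧ (At E1 C c (C s(u, y)) → σ = C s(u, y)) := by
    intro c hdc hcE
    by_cases hg : At E1 C c (C s(u, y))
    · exact ⟨_, hg, Or.inl rfl, fun _ => rfl⟩
    · have h1 : ((inc G c).image C).card = D := by rw [hC.card_image hcE, hdc]
      have : ¬ (inc G c).image C ⊆ T := by
        intro h
        have := Finset.card_le_card h
        omega
      obtain ⟨σ, h2, h3⟩ := Finset.not_subset.1 this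
      obtain ⟨e, he, rfl⟩ := Finset.mem_image.1 h2
      exact ⟨_, ⟨e, hcE e he, (mem_inc.1 he).2, rfl⟩, Or.inr h3, fun h => absurd h hg⟩
  obtain ⟨σ, hσ1, hσ2, hσ3⟩ := choose w hdw hwE
  obtain ⟨τ, hτ1, hτ2, hτ3⟩ := choose z hdz hzE
  have inw : ∀ {c}, G.Adj w c → s(w, c) ∈ E1 := fun h => hwE _ (mem_inc.2 ⟨h, by simp⟩)
  have inz : ∀ {c}, G.Adj z c → s(z, c) ∈ E1 := fun h => hzE _ (mem_inc.2 ⟨h, by simp⟩)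
  obtain ⟨C1, hC1, hv1, hat1, hag1⟩ := hC.adjust hE1G hdv (by omega) hr12 hr1 hr2 hvwE
    (inw hwr1) (inw hwr2) (g := C s(u, y)) (σ := σ) (τ := τ) (fun h => Or.inl (hσ3 h).symm) (by
      intro c hc hcw e he hce hne
      rcases F.hN c hc with rfl | rfl | h3
      · rw [atu e he hce]
      · exact absurd rfl hcw
      · exact absurd (pend_of_mem h3 hc he.1 hce) he.2.1)
  have hy1 : ∀ e ∈ E1, y ∈ e → C1 e = C e := by
    intro e he hye
    by_contra hne
    obtain ⟨h1, h2⟩ := hag1 e hne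
    have := (Sym2.mem_and_mem_iff hyw).1 ⟨hye, h1⟩
    subst this
    rcases h2 with h2 | ⟨r, hr, h2⟩
    · rw [Sym2.eq_iff] at h2; grind
    · simp at hr
      rcases hr with rfl | rfl <;> omega
  obtain ⟨C2, hC2, hv2, hat2, hag2⟩ := hC1.adjust hE1G hdx (by omega) ht12 ht1 ht2 hxzE
    (inz hzt1) (inz hzt2) (g := C s(u, y)) (σ := σ) (τ := τ) (fun h =>
      Or.inr (hτ3 ((hat1 z hvz.symm (by omega) _).1 h)).symm) (by
      intro c hc hcw e he hce hne
      rcases F'.hN c hc with rfl | rfl | h3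
      · rw [hy1 e he, atu e he hce]
        rw [atu e he hce]; simp
      · exact absurd rfl hcw
      · exact absurd (pend_of_mem h3 hc he.1 hce) he.2.2.1)
  have hy2 : ∀ e ∈ E1, y ∈ e → C2 e = C e := by
    intro e he hye
    rw [← hy1 e he hye]
    by_contra hne
    obtain ⟨h1, h2⟩ := hag2 e hne
    have := (Sym2.mem_and_mem_iff hyz).1 ⟨hye, h1⟩
    subst this
    rcases h2 with h2 | ⟨r, hr, h2⟩
    · rw [Sym2.eq_iff] at h2; grind
    · simp at hr
      rcases hr with rfl | rfl <;> omega
  have hvw2 : C2 s(v, w) = C1 s(v, w) := by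
    by_contra hne
    obtain ⟨h1, h2⟩ := hag2 _ hne
    rcases h2 with h2 | ⟨r, hr, h2⟩
    · rw [Sym2.eq_iff] at h2; grind
    · simp at hr
      rcases hr with rfl | rfl <;> omega
  have hAw : At E1 C2 w σ := (hat2 w hxw.symm (by omega) _).2 ((hat1 w hvw.symm (by omega) _).2 hσ1)
  have hAz : At E1 C2 z τ := (hat2 z hxz.symm (by omega) _).2 ((hat1 z hvz.symm (by omega) _).2 hτ1)
  -- coloring a pendant edge at `u`
  have step : ∀ (E : Set (Sym2 V)) (C' : Sym2 V → Fin (3 * D - 3)) (q : V) (ρ : Fin (3 * D - 3)),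
      G.Adj u q → dg G q = 1 → s(u, q) ∉ E → E1 ⊆ E → (∀ e ∈ E, e ∉ E1 → u ∈ e) →
      E ⊆ G.edgeSet →
      Col G E C' → (∀ e ∈ E1, C' e = C2 e) → C2 s(v, w) ≠ ρ → C2 s(x, z) ≠ ρ →
      (ρ = C s(u, y) ∨ ρ ∉ T) →
      ∃ (E' : Set (Sym2 V)) (C'' : Sym2 V → Fin (3 * D - 3)), E ⊆ E' ∧
        E' ⊆ Insert.insert s(u, q) E ∧ Col G E' C'' ∧ (∀ e ∈ E, C'' e = C' e) ∧ At E' C'' u ρ := by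
    intro E C' q ρ huq hq hqE hEE hEu hEG hC' hag hne1 hne2 hρ
    by_cases hat : At E C' u ρ
    · exact ⟨E, C', le_refl _, Set.subset_insert _ _, hC', fun _ _ => rfl, hat⟩
    refine ⟨_, _, Set.subset_insert _ _, le_refl _, hC'.update (c := ρ) hqE ?_, ?_,
      ⟨_, Or.inl rfl, by simp, Function.update_self _ _ _⟩⟩
    · intro e' he' hcf hceq
      by_cases hu : u ∈ e'
      · exact hat ⟨e', he', hu, hceq⟩
      have he1 : e' ∈ E1 := by
        by_contra h; exact hu (hEu e' he' h)
      rw [hag e' he1] at hceq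
      obtain ⟨c, hz, h1, h2⟩ := conf_pend hq huq he1.1 hcf
      rcases hN c h1 with rfl | rfl | rfl | h3
      · rw [atv e' he1 hz] at hceq
        exact hne1 hceq
      · rw [atx e' he1 hz] at hceq
        exact hne2 hceq
      · rcases hρ with rfl | hρ
        · apply hat
          refine ⟨s(u, c), hEE huyE, by simp, ?_⟩
          rw [hag _ huyE, hy2 _ huyE (by simp)]
        · rw [hy2 e' he1 hz] at hceq
          apply hρ
          rw [← hceq]
          apply hTm e' he1 hz
          rintro rfl; simp at hu
      · exact absurd (inc_of_pend (pend_of_mem h3 h1 he1.1 hz)) hu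
    · intro e he
      apply Function.update_of_ne
      rintro rfl; exact hqE he
  obtain ⟨E', C3, hs1, hs2, hC3, hag3, hA3⟩ := step E1 C2 q1 σ huq1 hq1 (huqE q1 hq1) (le_refl _)
    (fun e h1 h2 => absurd h1 h2) hE1G hC2 (fun _ _ => rfl) (by rw [hvw2]; exact hv1.2.1)
    hv2.2.1 hσ2
  obtain ⟨E'', C4, hs3, hs4, hC4, hag4, hA4⟩ := step E' C3 q2 τ huq2 hq2 (by
      intro h
      rcases hs2 h with h | h
      · rw [Sym2.eq_iff] at h; grind
      · exact huqE q2 hq2 h) hs1 (by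
      intro e h1 h2
      rcases hs2 h1 with rfl | h
      · simp
      · exact absurd h h2) (by
      intro e h1
      rcases hs2 h1 with rfl | h
      · exact huq1
      · exact h.1) hC3 hag3 (by rw [hvw2]; exact hv1.2.2) hv2.2.2 hτ2
  refine fill E'' C4 (hs1.trans hs3) (hs4.trans (Set.insert_subset_insert hs2)) hC4 ⟨σ, ?_, ?_⟩
    ⟨τ, hA4, ?_⟩
  · exact hA3.ext hs3 hag4
  · exact (hAw.ext hs1 hag3).ext hs3 hag4
  · exact (hAz.ext hs1 hag3).ext hs3 hag4

/-- Neighbours of degree at least two. -/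
noncomputable def NA (G : SimpleGraph V) (v : V) : Finset V := (nb G v).filter (fun w => 2 ≤ dg G w)

/-- Pendant neighbours. -/
noncomputable def NP (G : SimpleGraph V) (v : V) : Finset V := (nb G v).filter (fun w => dg G w = 1)

/-- Neighbours of degree two. -/
noncomputable def NT (G : SimpleGraph V) (v : V) : Finset V := (nb G v).filter (fun w => dg G w = 2)

/-- Number of neighbours of degree at least two. -/
noncomputable def kA (G : SimpleGraph V) (v : V) : ℕ := (NA G v).card

/-- Number of pendant neighbours. -/
noncomputable def pA (G : SimpleGraph V) (v : V) : ℕ := (NP G v).card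

theorem mem_NA {v w : V} : w ∈ NA G v ↔ G.Adj v w ∧ 2 ≤ dg G w := by
  simp [NA, mem_nb]

theorem mem_NP {v w : V} : w ∈ NP G v ↔ G.Adj v w ∧ dg G w = 1 := by
  simp [NP, mem_nb]

theorem mem_NT {v w : V} : w ∈ NT G v ↔ G.Adj v w ∧ dg G w = 2 := by
  simp [NT, mem_nb]

theorem dg_pos {v w : V} (h : G.Adj v w) : 1 ≤ dg G w :=
  Finset.card_pos.2 ⟨v, mem_nb.2 h.symm⟩

theorem NP_eq (v : V) : NP G v = (nb G v).filter (fun w => ¬ 2 ≤ dg G w) := by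
  apply Finset.filter_congr
  intro w hw
  have := dg_pos (mem_nb.1 hw)
  omega

theorem kA_add_pA (v : V) : kA G v + pA G v = dg G v := by
  rw [kA, pA, NP_eq, NA, dg]
  exact Finset.card_filter_add_card_filter_not _

theorem sum_split (v : V) : ∑ w ∈ nb G v, dg G w = ∑ w ∈ NA G v, dg G w + pA G v := by
  rw [← Finset.sum_filter_add_sum_filter_not (nb G v) (fun w => 2 ≤ dg G w), ← NP_eq, pA]
  congr 1
  rw [Finset.card_eq_sum_ones]
  apply Finset.sum_congr rfl
  intro w hw
  exact (mem_NP.1 hw).2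

theorem MinCE.sum_NA_le {D : ℕ} (M : MinCE G D) (v : V) :
    ∑ w ∈ NA G v, dg G w ≤ kA G v * D := by
  rw [kA, ← smul_eq_mul]
  exact Finset.sum_le_card_nsmul _ _ _ (fun w _ => M.hdeg w)

theorem MinCE.rich_of_pA {D : ℕ} (M : MinCE G D) {v : V} (h : 1 ≤ pA G v) : Rich G D v := by
  obtain ⟨q, hq⟩ := Finset.card_pos.1 h
  exact M.pend_rich (mem_NP.1 hq).1 (mem_NP.1 hq).2

theorem MinCE.two_le_kA {D : ℕ} (M : MinCE G D) {v : V} (hv : 2 ≤ dg G v) : 2 ≤ kA G v := by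
  have h1 := kA_add_pA (G := G) v
  by_contra hk
  have hr := M.rich_of_pA (v := v) (by omega)
  unfold Rich at hr
  rw [sum_split] at hr
  have h2 := M.sum_NA_le v
  have h3 := M.hdeg v
  have hD := M.hD
  have : kA G v = 0 ∨ kA G v = 1 := by omega
  rcases this with h | h <;> rw [h] at h2 h1 <;> omega

theorem two_elems {s : Finset V} (h : s.card = 2) {a : V} (ha : a ∈ s) :
    ∃ b, b ≠ a ∧ b ∈ s ∧ s = {a, b} := by
  obtain ⟨x, y, hxy, rfl⟩ := Finset.card_eq_two.1 h
  simp only [Finset.mem_insert, Finset.mem_singleton] at ha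
  rcases ha with rfl | rfl
  · exact ⟨y, hxy.symm, by simp, rfl⟩
  · exact ⟨x, hxy, by simp, Finset.pair_comm _ _⟩

/-- Fat vertices. -/
theorem MinCE.fat {D : ℕ} (M : MinCE G D) {v u : V} (hk : kA G v = 2) (hd : 3 ≤ dg G v)
    (hu : u ∈ NA G v) : ∃ w, Fat G D v u w ∧ dg G v = D := by
  obtain ⟨w, hwu, hw, hs⟩ := two_elems hk hu
  have h1 := kA_add_pA (G := G) v
  have hr := M.rich_of_pA (v := v) (by omega)
  unfold Rich at hr
  rw [sum_split, hs, Finset.sum_pair hwu.symm] at hr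
  have h2 := M.hdeg u
  have h3 := M.hdeg w
  have h4 := M.hdeg v
  refine ⟨w, ⟨(mem_NA.1 hu).1, (mem_NA.1 hw).1, hwu.symm, ?_, ?_, by omega, by omega⟩, by omega⟩
  · intro x hx
    by_cases h : 2 ≤ dg G x
    · have : x ∈ NA G v := mem_NA.2 ⟨hx, h⟩
      rw [hs] at this
      simp at this
      tauto
    · have := dg_pos hx
      right; right; omega
  · have : 1 ≤ pA G v := by omega
    obtain ⟨q, hq⟩ := Finset.card_pos.1 this
    exact ⟨q, mem_NP.1 hq⟩

/-- The neighbours of a fat vertex have full degree. -/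
theorem MinCE.fat_nbr {D : ℕ} (M : MinCE G D) {v u : V} (hk : kA G v = 2) (hd : 3 ≤ dg G v)
    (hu : G.Adj v u) (hdu : 2 ≤ dg G u) : dg G u = D := by
  obtain ⟨w, F, _⟩ := M.fat hk hd (mem_NA.2 ⟨hu, hdu⟩)
  exact F.du

theorem two_pend {D : ℕ} {w : V} (hD : 9 ≤ D) (h : dg G w = D) (hk : kA G w ≤ 7) :
    ∃ a b, a ≠ b ∧ G.Adj w a ∧ G.Adj w b ∧ dg G a = 1 ∧ dg G b = 1 := by
  have h1 := kA_add_pA (G := G) w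
  have : 1 < (NP G w).card := by
    have : (NP G w).card = pA G w := rfl
    omega
  obtain ⟨a, ha, b, hb, hab⟩ := Finset.one_lt_card.1 this
  exact ⟨a, b, hab, (mem_NP.1 ha).1, (mem_NP.1 hb).1, (mem_NP.1 ha).2, (mem_NP.1 hb).2⟩

theorem MinCE.light' {D : ℕ} (M : MinCE G D) {a u : V} (hau : G.Adj a u) (ha2 : 2 ≤ dg G a)
    (ha3 : dg G a ≤ 3) (ht : dg G a - 1 ≤ ((NT G a).erase u).card) :
    Rich G D u ∧ pA G u ≤ 1 := by
  have hsub : (NT G a).erase u ⊆ (nb G a).erase u :=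
    Finset.erase_subset_erase _ (Finset.filter_subset _ _)
  have heq : (NT G a).erase u = (nb G a).erase u := by
    apply Finset.eq_of_subset_of_card_le hsub
    rw [Finset.card_erase_of_mem (mem_nb.2 hau)]
    exact ht
  obtain ⟨h1, h2⟩ := M.light hau ha2 ha3 (by
    intro b hb hbu
    have : b ∈ (nb G a).erase u := Finset.mem_erase.2 ⟨hbu, mem_nb.2 hb⟩
    rw [← heq] at this
    exact (mem_NT.1 (Finset.mem_of_mem_erase this)).2)
  refine ⟨h1, Finset.card_le_one.2 ?_⟩
  intro x hx y hy
  exact h2 x y (mem_NP.1 hx).1 (mem_NP.1 hy).1 (mem_NP.1 hx).2 (mem_NP.1 hy).2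

/-- Fat vertices without a neighbour of large core degree. -/
def Unhappy (G : SimpleGraph V) (v : V) : Prop :=
  kA G v = 2 ∧ 3 ≤ dg G v ∧ ∀ w, G.Adj v w → kA G w ≤ 7

/-- The discharging rule (in thirds). -/
noncomputable def give (G : SimpleGraph V) (u v : V) : ℕ :=
  if 8 ≤ kA G u then 2 else if kA G u ≤ 2 then 0 else
  if dg G v = 2 then (if 1 ≤ (NT G v).card then 2 else 1) else
  if (dg G v = 3 ∧ 2 ≤ (NT G v).card) ∨ Unhappy G v then 1 else 0

/-- The inequality to prove at `v`. -/
def Good (G : SimpleGraph V) (v : V) : Prop :=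
  8 + ∑ u ∈ NA G v, give G v u ≤ 3 * kA G v + ∑ u ∈ NA G v, give G u v

theorem good_large {v : V} (h : 8 ≤ kA G v) : Good G v := by
  unfold Good
  have : ∑ u ∈ NA G v, give G v u = kA G v * 2 := by
    rw [Finset.sum_congr rfl (fun u _ => show give G v u = 2 by simp [give, h])]
    simp [kA]
  omega

theorem give_big {u v : V} (h : 8 ≤ kA G u) : give G u v = 2 := by simp [give, h]

theorem give_thin {u v : V} (h : 3 ≤ kA G u) (hv : dg G v = 2) : 1 ≤ give G u v := by
  unfold give
  split_ifs <;> omega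

theorem give_pair {u v : V} (h : 3 ≤ kA G u) (hv : dg G v = 2) (h2 : 1 ≤ (NT G v).card) :
    give G u v = 2 := by
  unfold give
  split_ifs <;> omega

theorem give_other {u v : V} (h : 3 ≤ kA G u)
    (hv : (dg G v = 3 ∧ 2 ≤ (NT G v).card) ∨ Unhappy G v) : 1 ≤ give G u v := by
  unfold give
  split_ifs <;> omega

theorem MinCE.good_two {D : ℕ} (M : MinCE G D) {v : V} (hv : kA G v = 2) : Good G v := by
  have hD := M.hD
  have hout : ∑ u ∈ NA G v, give G v u = 0 := by
    apply Finset.sum_eq_zero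
    intro u _
    simp [give, hv]
  unfold Good
  rw [hout, hv]
  suffices 2 ≤ ∑ u ∈ NA G v, give G u v by omega
  have hdv := kA_add_pA (G := G) v
  by_cases hthin : dg G v = 2
  · have hp : pA G v = 0 := by omega
    -- a thin pair
    have pair : ∀ a ∈ NA G v, dg G a = 2 → 2 ≤ ∑ u ∈ NA G v, give G u v := by
      intro a ha hda
      obtain ⟨b, hba, hb, hs⟩ := two_elems hv ha
      obtain ⟨hr, hpb⟩ := M.light' (mem_NA.1 hb).1 (by omega) (by omega) (by
        have : a ∈ (NT G v).erase b :=
          Finset.mem_erase.2 ⟨hba.symm, mem_NT.2 ⟨(mem_NA.1 ha).1, hda⟩⟩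
        have := Finset.card_pos.2 ⟨a, this⟩
        omega)
      have hkb : 3 ≤ kA G b := by
        unfold Rich at hr
        rw [sum_split] at hr
        have h2 := M.sum_NA_le b
        by_contra hk
        have : kA G b * D ≤ 2 * D := Nat.mul_le_mul_right _ (by omega)
        omega
      have h1 := give_pair hkb hthin
        (Finset.card_pos.2 ⟨a, mem_NT.2 ⟨(mem_NA.1 ha).1, hda⟩⟩)
      rw [← h1]
      exact Finset.single_le_sum (f := fun u => give G u v) (fun _ _ => Nat.zero_le _) hb
    by_cases hex : ∃ a ∈ NA G v, dg G a = 2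
    · obtain ⟨a, ha, hda⟩ := hex
      exact pair a ha hda
    push Not at hex
    have : ∑ u ∈ NA G v, 1 ≤ ∑ u ∈ NA G v, give G u v := by
      apply Finset.sum_le_sum
      intro a ha
      have h1 := hex a ha
      have h2 := (mem_NA.1 ha)
      have h3 := M.two_le_kA h2.2
      apply give_thin _ hthin
      by_contra hk
      have := M.fat_nbr (v := a) (u := v) (by omega) (by omega) h2.1.symm (by omega)
      omega
    rw [Finset.sum_const, smul_eq_mul] at this
    have h : (NA G v).card = kA G v := rfl
    omega
  · by_cases hun : Unhappy G v
    · have : ∑ u ∈ NA G v, 1 ≤ ∑ u ∈ NA G v, give G u v := by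
        apply Finset.sum_le_sum
        intro a ha
        have h2 := (mem_NA.1 ha)
        have h3 := M.two_le_kA h2.2
        apply give_other _ (Or.inr hun)
        by_contra hk
        obtain ⟨b, F, hvD⟩ := M.fat hv hun.2.1 ha
        obtain ⟨y, F', haD⟩ := M.fat (v := a) (u := v) (by omega) (by have := F.du; omega)
          (mem_NA.2 ⟨h2.1.symm, by omega⟩)
        obtain ⟨x, q, hxq, hax, haq, hx, hq⟩ := two_pend hD haD (by omega)
        obtain ⟨r, r', _, hbr, _, hr, _⟩ := two_pend hD F.dw (hun.2.2 b F.hw)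
        have hdy := F'.dw
        refine M.lemB F hax F'.hw (by rintro rfl; omega) F'.hne (by rintro rfl; omega) ?_
          hbr hr haq hq hxq.symm (by omega) (by omega) (Or.inl hx)
        intro z hz
        rcases F'.hN z hz with h | h | h
        · exact Or.inl h
        · exact Or.inr (Or.inr (Or.inl h))
        · exact Or.inr (Or.inr (Or.inr h))
      rw [Finset.sum_const, smul_eq_mul] at this
      have h : (NA G v).card = kA G v := rfl
      omega
    · have : ∃ w, G.Adj v w ∧ 8 ≤ kA G w := by
        by_contra hcon
        push Not at hcon
        exact hun ⟨hv, by omega, fun w hw => by have := hcon w hw; omega⟩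
      obtain ⟨w, hw, hkw⟩ := this
      have h1 := kA_add_pA (G := G) w
      have h2 : w ∈ NA G v := mem_NA.2 ⟨hw, by omega⟩
      rw [← give_big (v := v) hkw]
      exact Finset.single_le_sum (f := fun u => give G u v) (fun _ _ => Nat.zero_le _) h2

theorem three_cases {s : Finset V} (hs : s.card = 3) (o : V → ℕ) (ho : ∀ u ∈ s, o u ≤ 1) :
    ∑ u ∈ s, o u ≤ 1 ∨ ∃ a b c, a ≠ b ∧ a ≠ c ∧ b ≠ c ∧ s = {a, b, c} ∧ o a = 1 ∧ o b = 1 := by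
  obtain ⟨a, b, c, hab, hac, hbc, rfl⟩ := Finset.card_eq_three.1 hs
  have ha := ho a (by simp)
  have hb := ho b (by simp)
  have hc := ho c (by simp)
  rw [Finset.sum_insert (by simp [hab, hac]), Finset.sum_pair hbc]
  by_cases h1 : o a = 1 <;> by_cases h2 : o b = 1 <;> by_cases h3 : o c = 1
  · exact Or.inr ⟨a, b, c, hab, hac, hbc, rfl, h1, h2⟩
  · exact Or.inr ⟨a, b, c, hab, hac, hbc, rfl, h1, h2⟩
  · refine Or.inr ⟨a, c, b, hac, hab, hbc.symm, ?_, h1, h3⟩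
    ext x; simp; tauto
  · left; omega
  · refine Or.inr ⟨b, c, a, hbc, hab.symm, hac.symm, ?_, h2, h3⟩
    ext x; simp; tauto
  · left; omega
  · left; omega
  · left; omega

/-- What a middle vertex gives. -/
theorem give_mid {v u : V} (h3 : 3 ≤ kA G v) (h7 : kA G v ≤ 7) :
    give G v u = 0 ∨ (give G v u = 1 ∧ (dg G u = 2 ∨ (dg G u = 3 ∧ 2 ≤ (NT G u).card) ∨
      Unhappy G u)) ∨ (give G v u = 2 ∧ dg G u = 2 ∧ 1 ≤ (NT G u).card) := by
  unfold give
  rw [if_neg (by omega), if_neg (by omega)]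
  split_ifs with h1 h2 h4
  · exact Or.inr (Or.inr ⟨rfl, h1, h2⟩)
  · exact Or.inr (Or.inl ⟨rfl, Or.inl h1⟩)
  · exact Or.inr (Or.inl ⟨rfl, Or.inr h4⟩)
  · exact Or.inl rfl

/-- No pair or bad neighbours unless rich with at most one pendant. -/
theorem MinCE.give_light {D : ℕ} (M : MinCE G D) {v u : V} (h3 : 3 ≤ kA G v) (h7 : kA G v ≤ 7)
    (hu : u ∈ NA G v) (hn : ¬ (Rich G D v ∧ pA G v ≤ 1)) :
    give G v u = 0 ∨ (give G v u = 1 ∧ (dg G u = 2 ∨ Unhappy G u)) := by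
  have hdv := kA_add_pA (G := G) v
  have hnt : v ∉ NT G u := by
    intro h
    have := (mem_NT.1 h).2
    omega
  rcases give_mid (u := u) h3 h7 with h | ⟨h, h1 | h1 | h1⟩ | ⟨h, h1, h2⟩
  · exact Or.inl h
  · exact Or.inr ⟨h, Or.inl h1⟩
  · exfalso
    apply hn
    apply M.light' (mem_NA.1 hu).1.symm (by omega) (by omega)
    rw [Finset.erase_eq_of_notMem hnt]
    omega
  · exact Or.inr ⟨h, Or.inr h1⟩
  · exfalso
    apply hn
    apply M.light' (mem_NA.1 hu).1.symm (by omega) (by omega)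
    rw [Finset.erase_eq_of_notMem hnt]
    omega

theorem MinCE.unhappy_deg {D : ℕ} (M : MinCE G D) {v u : V} (hu : Unhappy G u)
    (huv : G.Adj u v) (hv : 2 ≤ dg G v) : dg G v = D :=
  M.fat_nbr hu.1 hu.2.1 huv hv

theorem MinCE.good_rich {D : ℕ} (M : MinCE G D) {v : V} (h3 : 3 ≤ kA G v) (h7 : kA G v ≤ 7)
    (hr : Rich G D v) (hp : pA G v ≤ 1) : Good G v := by
  have hD := M.hD
  have hdv := kA_add_pA (G := G) v
  have key : ∑ u ∈ NA G v, (D * give G v u + 3 * dg G u) ≤ ∑ u ∈ NA G v, 3 * D := by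
    apply Finset.sum_le_sum
    intro u hu
    have hdu := M.hdeg u
    have hu' := mem_NA.1 hu
    rcases give_mid (u := u) h3 h7 with h | ⟨h, h1 | h1 | h1⟩ | ⟨h, h1, h2⟩ <;> rw [h]
    · omega
    · omega
    · omega
    · have := M.unhappy_deg h1 hu'.1.symm (by omega)
      omega
    · omega
  rw [Finset.sum_add_distrib, ← Finset.mul_sum, ← Finset.mul_sum, Finset.sum_const,
    smul_eq_mul] at key
  unfold Rich at hr
  rw [sum_split] at hr
  unfold Good
  have hk : (NA G v).card = kA G v := rfl
  rw [hk] at key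
  set o := ∑ u ∈ NA G v, give G v u
  set d := ∑ u ∈ NA G v, dg G u
  have : 8 + o ≤ 3 * kA G v := by
    by_contra hcon
    have h1 : 3 * kA G v ≤ 7 + o := by omega
    have h2 : D * (3 * kA G v) ≤ D * (7 + o) := Nat.mul_le_mul_left _ h1
    have h4 : 9 * D - 9 ≤ 3 * d := by omega
    have h5 : D * o + 3 * d ≤ 7 * D + D * o := by nlinarith
    omega
  omega

theorem MinCE.good_poor {D : ℕ} (M : MinCE G D) {v : V} (h3 : 3 ≤ kA G v) (h7 : kA G v ≤ 7)
    (hr : ¬ Rich G D v) : Good G v := by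
  have hD := M.hD
  have hdv := kA_add_pA (G := G) v
  have hp : pA G v = 0 := by
    by_contra h
    exact hr (M.rich_of_pA (by omega))
  have hg : ∀ u ∈ NA G v, give G v u = 0 ∨ (give G v u = 1 ∧ dg G u = 2) := by
    intro u hu
    rcases M.give_light h3 h7 hu (fun h => hr h.1) with h | ⟨h, h1 | h1⟩
    · exact Or.inl h
    · exact Or.inr ⟨h, h1⟩
    · have := M.unhappy_deg h1 (mem_NA.1 hu).1.symm (by omega)
      omega
  have hg1 : ∀ u ∈ NA G v, give G v u ≤ 1 := by
    intro u hu
    rcases hg u hu with h | h <;> omega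
  have hsum : ∑ u ∈ NA G v, give G v u ≤ kA G v := by
    have := Finset.sum_le_card_nsmul (NA G v) (give G v) 1 hg1
    simpa [kA] using this
  unfold Good
  by_cases hk4 : 4 ≤ kA G v
  · omega
  have hk : (NA G v).card = 3 := by
    have h : (NA G v).card = kA G v := rfl
    omega
  rcases three_cases hk (give G v) hg1 with h | ⟨a, b, c, hab, hac, hbc, hs, ha, hb⟩
  · omega
  have hda : dg G a = 2 := by
    rcases hg a (by rw [hs]; simp) with h | h <;> omega
  have hdb : dg G b = 2 := by
    rcases hg b (by rw [hs]; simp) with h | h <;> omega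
  have hva : G.Adj v a := (mem_NA.1 (show a ∈ NA G v by rw [hs]; simp)).1
  have hvb : G.Adj v b := (mem_NA.1 (show b ∈ NA G v by rw [hs]; simp)).1
  have hcm : c ∈ NA G v := by rw [hs]; simp
  have hvc := mem_NA.1 hcm
  have hNT : 2 ≤ (NT G v).card := by
    have h : ({a, b} : Finset V) ⊆ NT G v := by
      intro x hx
      simp only [Finset.mem_insert, Finset.mem_singleton] at hx
      rcases hx with rfl | rfl
      · exact mem_NT.2 ⟨hva, hda⟩
      · exact mem_NT.2 ⟨hvb, hdb⟩
    have := Finset.card_le_card h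
    rwa [Finset.card_pair hab] at this
  have hdc : dg G c ≠ 2 := by
    intro hdc
    obtain ⟨h1, _⟩ := M.light' (a := v) (u := a) hva (by omega) (by omega) (by
      have h : ({b, c} : Finset V) ⊆ (NT G v).erase a := by
        intro x hx
        simp only [Finset.mem_insert, Finset.mem_singleton] at hx
        rcases hx with rfl | rfl
        · exact Finset.mem_erase.2 ⟨hab.symm, mem_NT.2 ⟨hvb, hdb⟩⟩
        · exact Finset.mem_erase.2 ⟨hac.symm, mem_NT.2 ⟨hvc.1, hdc⟩⟩
      have := Finset.card_le_card h
      rw [Finset.card_pair hbc] at this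
      omega)
    unfold Rich at h1
    have h2 : ∑ w ∈ nb G a, dg G w ≤ dg G a * D := by
      rw [dg, ← smul_eq_mul]
      exact Finset.sum_le_card_nsmul _ _ _ (fun w _ => M.hdeg w)
    rw [hda] at h2
    omega
  have hkc : 3 ≤ kA G c := by
    have := M.two_le_kA hvc.2
    by_contra h
    have := M.fat_nbr (v := c) (u := v) (by omega) (by omega) hvc.1.symm (by omega)
    omega
  have hgc : give G v c = 0 := by
    rcases hg c hcm with h | h
    · exact h
    · exact absurd h.2 hdc
  have hin : 1 ≤ give G c v := give_other hkc (Or.inl ⟨by omega, hNT⟩)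
  have hin2 := Finset.single_le_sum (f := fun u => give G u v) (fun _ _ => Nat.zero_le _) hcm
  have hout : ∑ u ∈ NA G v, give G v u = 2 := by
    rw [hs, Finset.sum_insert (by simp [hab, hac]), Finset.sum_pair hbc]
    omega
  have : kA G v = 3 := hk
  omega

theorem MinCE.good_pend {D : ℕ} (M : MinCE G D) {v : V} (h3 : 3 ≤ kA G v) (h7 : kA G v ≤ 7)
    (hp : 2 ≤ pA G v) : Good G v := by
  have hD := M.hD
  have hdv := kA_add_pA (G := G) v
  have hr := M.rich_of_pA (v := v) (by omega)
  have hg : ∀ u ∈ NA G v, give G v u = 0 ∨ (give G v u = 1 ∧ (dg G u = 2 ∨ Unhappy G u)) := by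
    intro u hu
    exact M.give_light h3 h7 hu (fun h => by omega)
  have hg1 : ∀ u ∈ NA G v, give G v u ≤ 1 := by
    intro u hu
    rcases hg u hu with h | h <;> omega
  have hsum : ∑ u ∈ NA G v, give G v u ≤ kA G v := by
    have := Finset.sum_le_card_nsmul (NA G v) (give G v) 1 hg1
    simpa [kA] using this
  unfold Good
  by_cases hk4 : 4 ≤ kA G v
  · omega
  have hk : (NA G v).card = 3 := by
    have h : (NA G v).card = kA G v := rfl
    omega
  have hk' : kA G v = 3 := hk
  rcases three_cases hk (give G v) hg1 with h | ⟨a, b, c, hab, hac, hbc, hs, ha, hb⟩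
  · omega
  have ham : a ∈ NA G v := by rw [hs]; simp
  have hbm : b ∈ NA G v := by rw [hs]; simp
  have hcm : c ∈ NA G v := by rw [hs]; simp
  have hva := mem_NA.1 ham
  have hvb := mem_NA.1 hbm
  have hvc := mem_NA.1 hcm
  have hN : ∀ z, G.Adj v z → z = a ∨ z = b ∨ z = c ∨ dg G z = 1 := by
    intro z hz
    by_cases h : 2 ≤ dg G z
    · have : z ∈ NA G v := mem_NA.2 ⟨hz, h⟩
      rw [hs] at this
      simp at this
      tauto
    · have := dg_pos hz
      right; right; right; omega
  obtain ⟨q1, hq1, q2, hq2, hq12⟩ := Finset.one_lt_card.1 (show 1 < (NP G v).card from hp)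
  have hq1' := mem_NP.1 hq1
  have hq2' := mem_NP.1 hq2
  by_cases hkc : 8 ≤ kA G c
  · have h1 := give_big (v := v) hkc
    have hin2 := Finset.single_le_sum (f := fun u => give G u v) (fun _ _ => Nat.zero_le _) hcm
    omega
  exfalso
  have hdcp : dg G c < D ∨ ∃ t, G.Adj c t ∧ dg G t = 1 := by
    by_cases h : dg G c < D
    · exact Or.inl h
    · have := M.hdeg c
      obtain ⟨t, _, _, h1, _, h2, _⟩ := two_pend (G := G) (w := c) hD (by omega) (by omega)
      exact Or.inr ⟨t, h1, h2⟩
  rcases hg a ham with h | ⟨_, h1⟩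
  · omega
  rcases hg b hbm with h | ⟨_, h2⟩
  · omega
  have fatthin : ∀ x y, x ∈ NA G v → y ∈ NA G v → x ≠ y → x ≠ c → y ≠ c →
      (∀ z, G.Adj v z → z = x ∨ z = y ∨ z = c ∨ dg G z = 1) →
      Unhappy G x → dg G y = 2 → False := by
    intro x y hx hy hxy hxc hyc hN' hun hdy
    obtain ⟨w, F, _⟩ := M.fat (u := v) hun.1 hun.2.1
      (mem_NA.2 ⟨(mem_NA.1 hx).1.symm, by omega⟩)
    obtain ⟨r, _, _, hwr, _, hr, _⟩ := two_pend hD F.dw (hun.2.2 w F.hw)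
    exact M.lemB F (mem_NA.1 hy).1 hvc.1 hxy hxc hyc hN' hwr hr hq1'.1 hq1'.2
      (by rintro rfl; omega) hvc.2 (by omega) (Or.inr hdcp)
  rcases h1 with h1 | h1 <;> rcases h2 with h2 | h2
  · unfold Rich at hr
    rw [sum_split, hs, Finset.sum_insert (by simp [hab, hac]), Finset.sum_pair hbc] at hr
    have := M.hdeg c
    have := M.hdeg v
    omega
  · refine fatthin b a hbm ham hab.symm hbc hac ?_ h2 h1
    intro z hz
    rcases hN z hz with h | h | h | h
    · exact Or.inr (Or.inl h)
    · exact Or.inl h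
    · exact Or.inr (Or.inr (Or.inl h))
    · exact Or.inr (Or.inr (Or.inr h))
  · exact fatthin a b ham hbm hab hac hbc hN h1 h2
  · obtain ⟨w, F, _⟩ := M.fat (u := v) h1.1 h1.2.1 (mem_NA.2 ⟨hva.1.symm, by omega⟩)
    obtain ⟨z, F', _⟩ := M.fat (u := v) h2.1 h2.2.1 (mem_NA.2 ⟨hvb.1.symm, by omega⟩)
    obtain ⟨r1, r2, hr12, hwr1, hwr2, hr1, hr2⟩ := two_pend hD F.dw (h1.2.2 w F.hw)
    obtain ⟨t1, t2, ht12, hzt1, hzt2, ht1, ht2⟩ := two_pend hD F'.dw (h2.2.2 z F'.hw)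
    exact M.lemC F F' hvc.1 hab hac hbc hN hq12 hq1'.1 hq2'.1 hq1'.2 hq2'.2
      hr12 hwr1 hwr2 hr1 hr2 ht12 hzt1 hzt2 ht1 ht2 hvc.2

theorem MinCE.good {D : ℕ} (M : MinCE G D) {v : V} (hv : 2 ≤ dg G v) : Good G v := by
  have hk := M.two_le_kA hv
  by_cases h2 : kA G v = 2
  · exact M.good_two h2
  by_cases h8 : 8 ≤ kA G v
  · exact good_large h8
  by_cases hr : Rich G D v
  · by_cases hp : pA G v ≤ 1
    · exact M.good_rich (by omega) (by omega) hr hp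
    · exact M.good_pend (by omega) (by omega) (by omega)
  · exact M.good_poor (by omega) (by omega) hr

/-- Vertices of degree at least two. -/
noncomputable def core (G : SimpleGraph V) : Finset V := Finset.univ.filter (fun v => 2 ≤ dg G v)

theorem mem_core {v : V} : v ∈ core G ↔ 2 ≤ dg G v := by simp [core]

theorem MinCE.core_sum {D : ℕ} (M : MinCE G D) :
    8 * (core G).card ≤ 3 * ∑ v ∈ core G, kA G v := by
  have h1 : ∑ v ∈ core G, (8 + ∑ u ∈ NA G v, give G v u) ≤
      ∑ v ∈ core G, (3 * kA G v + ∑ u ∈ NA G v, give G u v) :=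
    Finset.sum_le_sum (fun v hv => M.good (mem_core.1 hv))
  have h2 : ∑ v ∈ core G, ∑ u ∈ NA G v, give G v u = ∑ v ∈ core G, ∑ u ∈ NA G v, give G u v := by
    apply Finset.sum_comm'
    intro x y
    simp only [mem_core, mem_NA]
    constructor
    · rintro ⟨h1, h2, h3⟩; exact ⟨⟨h2.symm, h1⟩, h3⟩
    · rintro ⟨⟨h1, h2⟩, h3⟩; exact ⟨h2, h1.symm, h3⟩
  rw [Finset.sum_add_distrib, Finset.sum_add_distrib, h2, ← Finset.mul_sum, Finset.sum_const,
    smul_eq_mul] at h1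
  omega

theorem core_edges (G : SimpleGraph V) :
    ∑ v ∈ core G, kA G v = 2 * {e ∈ G.edgeSet | ∀ v ∈ e, v ∈ core G}.ncard := by
  let H : SimpleGraph V :=
    { Adj := fun a b => G.Adj a b ∧ a ∈ core G ∧ b ∈ core G
      symm := ⟨fun a b h => ⟨h.1.symm, h.2.2, h.2.1⟩⟩
      loopless := ⟨fun a h => h.1.ne rfl⟩ }
  have hE : {e ∈ G.edgeSet | ∀ v ∈ e, v ∈ core G} = (H.edgeFinset : Set (Sym2 V)) := by
    ext e
    induction e with
    | _ a b => simp [H]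
  rw [hE, Set.ncard_coe_finset, ← H.sum_degrees_eq_twice_card_edges]
  rw [← Finset.sum_subset (Finset.subset_univ (core G))]
  · apply Finset.sum_congr rfl
    intro v hv
    rw [kA, ← SimpleGraph.card_neighborFinset_eq_degree]
    congr 1
    ext w
    simp only [mem_NA, SimpleGraph.mem_neighborFinset, H, mem_core] at hv ⊢
    tauto
  · intro v _ hv
    rw [← SimpleGraph.card_neighborFinset_eq_degree, Finset.card_eq_zero]
    ext w
    simp [H, hv]

theorem MinCE.core_nonempty {D : ℕ} (M : MinCE G D) : (core G).Nonempty := by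
  have hD := M.hD
  by_contra hcon
  rw [Finset.not_nonempty_iff_eq_empty] at hcon
  have hsmall : ∀ v, dg G v ≤ 1 := by
    intro v
    by_contra h
    have : v ∈ core G := mem_core.2 (by omega)
    rw [hcon] at this
    simp at this
  apply M.hno
  refine ⟨fun _ => ⟨0, by omega⟩, ?_⟩
  intro e he
  exfalso
  induction e with
  | _ a b =>
    have hab : G.Adj a b := he
    have h1 := dg_pos hab
    have h2 := hsmall b
    have hr := M.pend_rich hab (by omega)
    unfold Rich at hr
    have h3 : ∑ w ∈ nb G a, dg G w ≤ dg G a * 1 := by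
      rw [dg, ← smul_eq_mul]
      exact Finset.sum_le_card_nsmul _ _ _ (fun w _ => hsmall w)
    have := hsmall a
    omega

theorem coloring_exists (D : ℕ) (hD : 9 ≤ D) (G : SimpleGraph V)
    (hm : ∀ A : Finset V, A.Nonempty →
      3 * {e ∈ G.edgeSet | ∀ v ∈ e, v ∈ A}.ncard < 4 * A.card)
    (hdeg : ∀ v, dg G v ≤ D) : HasStrongColoring G (3 * D - 3) := by
  induction G using WellFoundedLT.induction with
  | ind G ih =>
    by_contra hno
    have M : MinCE G D := by
      refine ⟨hD, hdeg, hno, ?_⟩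
      intro H hH
      apply ih H hH
      · intro A hA
        refine lt_of_le_of_lt ?_ (hm A hA)
        refine Nat.mul_le_mul_left _ (Set.ncard_le_ncard ?_ (Set.toFinite _))
        rintro e ⟨h1, h2⟩
        exact ⟨SimpleGraph.edgeSet_mono hH.le h1, h2⟩
      · intro v
        refine le_trans (Finset.card_le_card ?_) (hdeg v)
        intro w hw
        exact mem_nb.2 (hH.le (mem_nb.1 hw))
    have h1 := M.core_sum
    rw [core_edges] at h1
    have h2 := hm _ M.core_nonempty
    omega

theorem mad_bound (G : SimpleGraph V) (hmad : mad G < 8 / 3) (A : Finset V) (hA : A.Nonempty) :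
    3 * {e ∈ G.edgeSet | ∀ v ∈ e, v ∈ A}.ncard < 4 * A.card := by
  have hfin : {x : ℝ | ∃ A : Finset V, A.Nonempty ∧
      x = 2 * ({e ∈ G.edgeSet | ∀ v ∈ e, v ∈ A}.ncard : ℝ) / (A.card : ℝ)}.Finite := by
    refine (Set.finite_range (fun A : Finset V =>
      2 * ({e ∈ G.edgeSet | ∀ v ∈ e, v ∈ A}.ncard : ℝ) / (A.card : ℝ))).subset ?_
    rintro x ⟨A, _, rfl⟩
    exact ⟨A, rfl⟩
  have h1 := le_csSup hfin.bddAbove ⟨A, hA, rfl⟩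
  have h2 := lt_of_le_of_lt h1 hmad
  have hpos : (0 : ℝ) < A.card := by exact_mod_cast hA.card_pos
  rw [div_lt_iff₀ hpos] at h2
  have h3 : (3 * {e ∈ G.edgeSet | ∀ v ∈ e, v ∈ A}.ncard : ℝ) < 4 * A.card := by linarith
  exact_mod_cast h3

theorem final {V : Type*} [Fintype V] (Δ : ℕ)
    (hΔ : 9 ≤ Δ) (G : SimpleGraph V) (hmad : mad G < 8 / 3) (hdeg : G.maxDegree ≤ Δ) :
    strongChromaticIndex G ≤ 3 * Δ - 3 := by
  apply Nat.sInf_le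
  apply coloring_exists Δ hΔ G (mad_bound G hmad)
  intro v
  have h1 := G.degree_le_maxDegree v
  have h2 : dg G v = G.degree v := by
    rw [dg, ← SimpleGraph.card_neighborFinset_eq_degree]
    congr 1
    ext w
    simp [mem_nb]
  omega


end Helpers

/-- If `Δ ≥ 9` and `G` has maximum average degree less than `8/3` and maximum degree at
most `Δ`, then `χ'_s(G) ≤ 3Δ - 3`. -/
theorem strong_chromatic_index_mad_lt_eight_thirds {V : Type*} [Fintype V] (Δ : ℕ)
    (hΔ : 9 ≤ Δ) (G : SimpleGraph V) (hmad : mad G < 8 / 3) (hdeg : G.maxDegree ≤ Δ) :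
    strongChromaticIndex G ≤ 3 * Δ - 3 := by
  exact final Δ hΔ G hmad hdeg

end StrongEC
end
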